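/- arXiv:2412.17233 — 4 statements merged into one kernel-verified Lean document; each statement's English description precedes it below -/
import Mathlib

section
/- For every t = (t_1,…,t_N) ∈ ℝ^N: if n is even then det(A(t)) = (t_1 t_2 ⋯ t_N)², and if n is odd then the determinant of the (n−1)×(n−1) submatrix of A(t) with rows and columns {1,…,n−1} equals (t_1 t_2 ⋯ t_N)². -/
noncomputable section

open Matrix

/-- `N = n(n-1)/2`, the number of parameters. -/
def Npar (n : ℕ) : ℕ := n * (n - 1) / 2

/-- The decreasing run `a, a-1, …, b` (empty if `b > a`). -/
def decRun (a b : ℕ) : List ℕ := (List.range' b (a + 1 - b)).reverse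

/-- The index sequence `(i_1, …, i_N)`: for `m = 1, …, ⌊n/2⌋` (here `m` is 0-based, so
`m+1` is the 1-based block index), concatenate `n`, the run `n-2, …, 2(m+1)-1`, and the
run `n-1, …, 2(m+1)`. -/
def wordD (n : ℕ) : List ℕ :=
  ((List.range (n / 2)).map (fun m =>
    n :: (decRun (n - 2) (2 * m + 1) ++ decRun (n - 1) (2 * m + 2)))).flatten

/-- The matrix `x_i(t)` (index `i` is 1-based, matrix positions are 1-based in the paper,
0-based here). -/
def xMat (n : ℕ) (i : ℕ) (t : ℝ) : Matrix (Fin (2 * n)) (Fin (2 * n)) ℝ :=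
  Matrix.of fun p q =>
    (if (p : ℕ) = (q : ℕ) then 1 else 0) +
    (if i < n then
        (if (p : ℕ) + 1 = i ∧ (q : ℕ) + 1 = i + 1 then t else 0)
      + (if (p : ℕ) + 1 = n + i + 1 ∧ (q : ℕ) + 1 = n + i then -t else 0)
     else
        (if (p : ℕ) + 1 = n - 1 ∧ (q : ℕ) + 1 = 2 * n then t else 0)
      + (if (p : ℕ) + 1 = n ∧ (q : ℕ) + 1 = 2 * n - 1 then -t else 0))

/-- The product `x_{i_1}(t_1) ⋯ x_{i_N}(t_N)`; the parameter `t l` plays the role of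
`t_{l+1}`. -/
def prodX (n : ℕ) (t : ℕ → ℝ) : Matrix (Fin (2 * n)) (Fin (2 * n)) ℝ :=
  ((List.range (Npar n)).map (fun l => xMat n ((wordD n).getD l 0) (t l))).prod

/-- The first block `X₁(t)` of the first `n` rows of the product. -/
def X1 (n : ℕ) (t : ℕ → ℝ) : Matrix (Fin n) (Fin n) ℝ :=
  Matrix.of fun p q =>
    prodX n t ⟨(p : ℕ), by have := p.isLt; omega⟩ ⟨(q : ℕ), by have := q.isLt; omega⟩

/-- The second block `X₂(t)` of the first `n` rows of the product. -/
def X2 (n : ℕ) (t : ℕ → ℝ) : Matrix (Fin n) (Fin n) ℝ :=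
  Matrix.of fun p q =>
    prodX n t ⟨(p : ℕ), by have := p.isLt; omega⟩ ⟨n + (q : ℕ), by have := q.isLt; omega⟩

/-- The skew-symmetric matrix `A(t) = X₁(t)⁻¹ · X₂(t)`. -/
def Amat (n : ℕ) (t : ℕ → ℝ) : Matrix (Fin n) (Fin n) ℝ := (X1 n t)⁻¹ * X2 n t

/-- The set `S_n^{>0}` of totally positive skew-symmetric matrices. -/
def Spos (n : ℕ) : Set (Matrix (Fin n) (Fin n) ℝ) :=
  { A | ∃ t : ℕ → ℝ, (∀ i < Npar n, 0 < t i) ∧ A = Amat n t }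

/-- The signed minor `M_{j,k}(A)`: `(-1)^{jk}` times the determinant of the submatrix of `A`
with (1-based) rows `{1,…,n-k-1} ∪ {n-k+j,…,n}` and columns `{1,…,n-j}`. -/
def Mminor (n j k : ℕ) (A : Matrix (Fin n) (Fin n) ℝ) : ℝ :=
  (-1 : ℝ) ^ (j * k) *
    Matrix.det (Matrix.of fun (p q : Fin (n - j)) =>
      A (if (p : ℕ) < n - k - 1
          then ⟨(p : ℕ), by have := p.isLt; omega⟩
          else ⟨(p : ℕ) + j, by have := p.isLt; omega⟩)
        ⟨(q : ℕ), by have := q.isLt; omega⟩)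

/-- The Pfaffian of an `m × m` matrix (intended for `m` even):
`Pf(B) = (1/(2^{m/2} (m/2)!)) Σ_σ sgn(σ) Π_i B_{σ(2i-1), σ(2i)}`. -/
def Pfaff {m : ℕ} (B : Matrix (Fin m) (Fin m) ℝ) : ℝ :=
  (1 / ((2 : ℝ) ^ (m / 2) * (Nat.factorial (m / 2) : ℝ))) *
    ∑ σ : Equiv.Perm (Fin m), ((Equiv.Perm.sign σ : ℤ) : ℝ) *
      ∏ i : Fin (m / 2),
        B (σ ⟨2 * (i : ℕ), by have := i.isLt; omega⟩)
          (σ ⟨2 * (i : ℕ) + 1, by have := i.isLt; omega⟩)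

/-- `Pf_I(A)`: the Pfaffian of the submatrix of `A` with rows and columns indexed by `I`
in increasing order. -/
def PfI {n : ℕ} (A : Matrix (Fin n) (Fin n) ℝ) (I : Finset (Fin n)) : ℝ :=
  Pfaff (Matrix.of fun (p q : Fin I.card) =>
    A ((I.orderIsoOfFin rfl p : Fin n)) ((I.orderIsoOfFin rfl q : Fin n)))

/-- `sgn(I,[n]) = (-1)^{(Σ_{i∈I} i) - |I|(|I|+1)/2}` (the elements of `I` are 1-based, so a
0-based element `i` contributes `i+1`; the natural subtraction agrees with the integer one
since the sum of `|I|` distinct positive integers is at least `|I|(|I|+1)/2`). -/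
def sgnSet {n : ℕ} (I : Finset (Fin n)) : ℝ :=
  (-1 : ℝ) ^ ((∑ i ∈ I, ((i : ℕ) + 1)) - I.card * (I.card + 1) / 2)

/-- The block matrix `[Id_n | A]`. -/
def IdA {n : ℕ} (A : Matrix (Fin n) (Fin n) ℝ) : Matrix (Fin n) (Fin (2 * n)) ℝ :=
  Matrix.of fun p q =>
    if h : (q : ℕ) < n then (if (p : ℕ) = (q : ℕ) then 1 else 0)
    else A p ⟨(q : ℕ) - n, by have := q.isLt; omega⟩

/-- The full word `(j_1, …, j_{2N})`: `1, 2,1, 3,2,1, …, n-1,…,1` followed by `(i_1,…,i_N)`. -/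
def wordFull (n : ℕ) : List ℕ :=
  (((List.range n).map (fun r => decRun r 1)).flatten) ++ wordD n

/-- `z(ε) = x_{j_1}(ε) ⋯ x_{j_{2N}}(ε)`. -/
def zeps (n : ℕ) (ε : ℝ) : Matrix (Fin (2 * n)) (Fin (2 * n)) ℝ :=
  ((wordFull n).map (fun i => xMat n i ε)).prod

/-- `Z(ε) = z(ε)ᵀ · z(ε)`. -/
def Zeps (n : ℕ) (ε : ℝ) : Matrix (Fin (2 * n)) (Fin (2 * n)) ℝ :=
  (zeps n ε)ᵀ * zeps n ε

/-- First block `Y₁(ε)` of `[Id_n | A] · Z(ε)`. -/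
def Y1 {n : ℕ} (A : Matrix (Fin n) (Fin n) ℝ) (ε : ℝ) : Matrix (Fin n) (Fin n) ℝ :=
  Matrix.of fun p q => (IdA A * Zeps n ε) p ⟨(q : ℕ), by have := q.isLt; omega⟩

/-- Second block `Y₂(ε)` of `[Id_n | A] · Z(ε)`. -/
def Y2 {n : ℕ} (A : Matrix (Fin n) (Fin n) ℝ) (ε : ℝ) : Matrix (Fin n) (Fin n) ℝ :=
  Matrix.of fun p q => (IdA A * Zeps n ε) p ⟨n + (q : ℕ), by have := q.isLt; omega⟩

/-- The simple generators `s_i` of the Weyl group `W` of `SO(2n)`, as permutations of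
`{1,…,2n}` (0-based here): for `1 ≤ i ≤ n-1`, `s_i = (i,i+1)(n+i,n+i+1)`; for `i = n`,
`s_n = (n,2n-1)(n-1,2n)`. -/
def sGen (n : ℕ) (i : ℕ) : Equiv.Perm (Fin (2 * n)) :=
  if h : 1 ≤ i ∧ i ≤ n - 1 ∧ 2 ≤ n then
    Equiv.swap ⟨i - 1, by omega⟩ ⟨i, by omega⟩ *
      Equiv.swap ⟨n + i - 1, by omega⟩ ⟨n + i, by omega⟩
  else if h2 : i = n ∧ 2 ≤ n then
    Equiv.swap ⟨n - 1, by omega⟩ ⟨2 * n - 2, by omega⟩ *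
      Equiv.swap ⟨n - 2, by omega⟩ ⟨2 * n - 1, by omega⟩
  else 1

/-- Membership in the Weyl group `W`: `σ(n+i) ≡ n + σ(i) (mod 2n)` for all `1 ≤ i ≤ n`,
and the number of `i ∈ {1,…,n}` with `σ(i) > n` is even. (All positions are 0-based; a
0-based value `v` corresponds to the 1-based value `v+1`.) -/
def inW (n : ℕ) (σ : Equiv.Perm (Fin (2 * n))) : Prop :=
  (∀ i : Fin n,
    ((σ ⟨n + (i : ℕ), by have := i.isLt; omega⟩ : Fin (2 * n)) : ℕ)
      ≡ n + ((σ ⟨(i : ℕ), by have := i.isLt; omega⟩ : Fin (2 * n)) : ℕ) [MOD 2 * n]) ∧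
  Even (Finset.univ.filter (fun i : Fin n =>
    n ≤ ((σ ⟨(i : ℕ), by have := i.isLt; omega⟩ : Fin (2 * n)) : ℕ))).card

/-- `I_w = {i ∈ {1,…,n} : w(i) > n}`, as a finset of `Fin n` (0-based). -/
def Iset (n : ℕ) (σ : Equiv.Perm (Fin (2 * n))) : Finset (Fin n) :=
  Finset.univ.filter (fun i : Fin n =>
    n ≤ ((σ ⟨(i : ℕ), by have := i.isLt; omega⟩ : Fin (2 * n)) : ℕ))

/-- The parabolic subgroup `W_{[n-1]}` generated by `s_1, …, s_{n-1}`. -/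
def Wpar (n : ℕ) : Subgroup (Equiv.Perm (Fin (2 * n))) :=
  Subgroup.closure { σ | ∃ i, 1 ≤ i ∧ i ≤ n - 1 ∧ σ = sGen n i }

/-- The standard basis vector `e_i` of `ℝ^{2n}` (with `i : Fin n` 0-based, sitting in
position `i` of the first block). -/
def evec (n : ℕ) (i : Fin n) : Fin (2 * n) → ℝ :=
  Pi.single ⟨(i : ℕ), by have := i.isLt; omega⟩ 1

/-- The standard basis vector `f_j` of `ℝ^{2n}` (position `n + j`). -/
def fvec (n : ℕ) (j : Fin n) : Fin (2 * n) → ℝ :=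
  Pi.single ⟨n + (j : ℕ), by have := j.isLt; omega⟩ 1

/-- `f = ι(f_1)⋯ι(f_n)` in the Clifford algebra. -/
def fElt {n : ℕ} (Q : QuadraticForm ℝ (Fin (2 * n) → ℝ)) : CliffordAlgebra Q :=
  (List.ofFn (fun j : Fin n => CliffordAlgebra.ι Q (fvec n j))).prod

/-- `e_S = ι(e_{l_1})⋯ι(e_{l_s})` where `l_1 < ⋯ < l_s` enumerates `S`. -/
def eProd {n : ℕ} (Q : QuadraticForm ℝ (Fin (2 * n) → ℝ)) (S : Finset (Fin n)) :
    CliffordAlgebra Q :=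
  ((S.sort (· ≤ ·)).map (fun l => CliffordAlgebra.ι Q (evec n l))).prod

/-- `h = Π_{i=1}^n ι(e_i + Σ_j A_{ij} f_j)` (product in increasing order of `i`). -/
def hElt {n : ℕ} (Q : QuadraticForm ℝ (Fin (2 * n) → ℝ)) (A : Matrix (Fin n) (Fin n) ℝ) :
    CliffordAlgebra Q :=
  (List.ofFn (fun i : Fin n =>
    CliffordAlgebra.ι Q (evec n i + ∑ j : Fin n, A i j • fvec n j))).prod

/-- The sorted list of the (1-based) elements of `S ⊆ {1,…,n}`. -/
def valsOf {n : ℕ} (S : Finset (Fin n)) : List ℕ :=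
  (S.sort (· ≤ ·)).map (fun i => (i : ℕ) + 1)

/-- The word `w_1 w_2 ⋯ w_r` where
`w_m = s_n (s_{n-2}⋯s_{i_{2m-1}}) (s_{n-1}⋯s_{i_{2m}})` and `vals` lists `i_1 < i_2 < ⋯`
(1-based); `m` is 0-based here. -/
def uWord (n r : ℕ) (vals : List ℕ) : List ℕ :=
  ((List.range r).map (fun m =>
    n :: (decRun (n - 2) (vals.getD (2 * m) 0) ++ decRun (n - 1) (vals.getD (2 * m + 1) 0)))).flatten

/-- The permutation `u = w_1 w_2 ⋯ w_r`. -/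
def uPerm (n r : ℕ) (vals : List ℕ) : Equiv.Perm (Fin (2 * n)) :=
  ((uWord n r vals).map (sGen n)).prod

/-- `L = r + Σ_{m=1}^{r} ((n-1-i_{2m-1}) + (n-i_{2m}))`. -/
def Lval (n r : ℕ) (vals : List ℕ) : ℕ :=
  r + ∑ m ∈ Finset.range r, ((n - 1 - vals.getD (2 * m) 0) + (n - vals.getD (2 * m + 1) 0))

/-- Levi generator. -/
def gG (n i : ℕ) (t : ℝ) : Matrix (Fin n) (Fin n) ℝ :=
  Matrix.of fun p q =>
    (if (p : ℕ) = (q : ℕ) then 1 else 0) + (if (p : ℕ) + 1 = i ∧ (q : ℕ) = i then t else 0)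

/-- The rank two skew matrix. -/
def nN (n : ℕ) : Matrix (Fin n) (Fin n) ℝ :=
  Matrix.of fun p q =>
    (if (p : ℕ) + 2 = n ∧ (q : ℕ) + 1 = n then 1 else 0)
      - (if (p : ℕ) + 1 = n ∧ (q : ℕ) + 2 = n then 1 else 0)

def eE (n : ℕ) : Fin n ⊕ Fin n ≃ Fin (2 * n) :=
  finSumFinEquiv.trans (finCongr (two_mul n).symm)

lemma eE_inl (n : ℕ) (p : Fin n) : ((eE n (Sum.inl p) : Fin (2 * n)) : ℕ) = p := by
  simp [eE]

lemma eE_inr (n : ℕ) (p : Fin n) : ((eE n (Sum.inr p) : Fin (2 * n)) : ℕ) = n + p := by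
  simp [eE, add_comm]

lemma mul_gG_apply {n i : ℕ} (t : ℝ) (R : Matrix (Fin n) (Fin n) ℝ) (k : Fin n)
    (hk : (k : ℕ) + 1 = i) (p q : Fin n) :
    (R * gG n i t) p q = R p q + if (q : ℕ) = i then R p k * t else 0 := by
  subst hk
  simp only [Matrix.mul_apply, gG, Matrix.of_apply, mul_add, Finset.sum_add_distrib]
  congr 1
  · rw [Finset.sum_eq_single q]
    · simp
    · intro b _ hb
      rw [if_neg (fun h => hb (Fin.ext h))]; simp
    · simp
  · rw [Finset.sum_eq_single k]
    · simp
    · intro b _ hb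
      rw [if_neg (fun h => hb (Fin.ext (by omega)))]; simp
    · simp

lemma gG_mul_neg {n i : ℕ} (h1 : 1 ≤ i) (h2 : i < n) (t : ℝ) :
    gG n i t * gG n i (-t) = 1 := by
  ext p q
  rw [mul_gG_apply (-t) _ ⟨i - 1, by omega⟩ (by simp; omega)]
  simp only [gG, Matrix.of_apply, Matrix.one_apply, Fin.ext_iff]
  split_ifs <;> first | omega | simp

lemma gG_neg_mul {n i : ℕ} (h1 : 1 ≤ i) (h2 : i < n) (t : ℝ) :
    gG n i (-t) * gG n i t = 1 := by
  simpa using gG_mul_neg h1 h2 (-t)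

lemma xMat_levi {n i : ℕ} (h1 : 1 ≤ i) (h2 : i < n) (t : ℝ) :
    (xMat n i t).submatrix (eE n) (eE n) = fromBlocks (gG n i t) 0 0 (gG n i (-t))ᵀ := by
  ext p q
  rcases p with p | p <;> rcases q with q | q <;>
    simp only [xMat, gG, Matrix.submatrix_apply, Matrix.of_apply, eE_inl, eE_inr, if_pos h2,
      fromBlocks_apply₁₁, fromBlocks_apply₁₂, fromBlocks_apply₂₁, fromBlocks_apply₂₂,
      Matrix.zero_apply, Matrix.transpose_apply] <;>
    have hp := p.isLt <;> have hq := q.isLt <;>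
    split_ifs <;> first | omega | simp

lemma xMat_top {n : ℕ} (hn : 2 ≤ n) (t : ℝ) :
    (xMat n n t).submatrix (eE n) (eE n) = fromBlocks 1 (t • nN n) 0 1 := by
  ext p q
  rcases p with p | p <;> rcases q with q | q <;>
    simp only [xMat, nN, Matrix.submatrix_apply, Matrix.of_apply, eE_inl, eE_inr, lt_irrefl,
      if_false, Matrix.smul_apply, smul_eq_mul, Matrix.one_apply, Fin.ext_iff,
      fromBlocks_apply₁₁, fromBlocks_apply₁₂, fromBlocks_apply₂₁, fromBlocks_apply₂₂,
      Matrix.zero_apply] <;>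
    have hp := p.isLt <;> have hq := q.isLt <;>
    split_ifs <;> first | omega | simp

/-- Product over a word, in block form. -/
def pX (n : ℕ) : List ℕ → (ℕ → ℝ) → Matrix (Fin (2 * n)) (Fin (2 * n)) ℝ
  | [], _ => 1
  | i :: w, t => xMat n i (t 0) * pX n w (fun k => t (k + 1))

def lV (n : ℕ) : List ℕ → (ℕ → ℝ) → Matrix (Fin n) (Fin n) ℝ
  | [], _ => 1
  | i :: w, t => gG n i (t 0) * lV n w (fun k => t (k + 1))

def rV (n : ℕ) : List ℕ → (ℕ → ℝ) → Matrix (Fin n) (Fin n) ℝ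
  | [], _ => 1
  | i :: w, t => rV n w (fun k => t (k + 1)) * gG n i (-(t 0))

lemma pX_append (n : ℕ) (w w' : List ℕ) (t : ℕ → ℝ) :
    pX n (w ++ w') t = pX n w t * pX n w' (fun k => t (k + w.length)) := by
  induction w generalizing t with
  | nil => simp [pX]
  | cons i w ih =>
    simp only [List.cons_append, pX, ih, List.length_cons, Matrix.mul_assoc]
    congr 3

lemma rV_append (n : ℕ) (w w' : List ℕ) (t : ℕ → ℝ) :
    rV n (w ++ w') t = rV n w' (fun k => t (k + w.length)) * rV n w t := by
  induction w generalizing t with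
  | nil => simp [rV]
  | cons i w ih =>
    simp only [List.cons_append, rV, ih, List.length_cons, Matrix.mul_assoc]
    congr 3

lemma pX_eq (n : ℕ) (w : List ℕ) (t : ℕ → ℝ) :
    ((List.range w.length).map (fun l => xMat n (w.getD l 0) (t l))).prod = pX n w t := by
  induction w generalizing t with
  | nil => simp [pX]
  | cons i w ih =>
    rw [List.length_cons, List.range_succ_eq_map, List.map_cons, List.prod_cons, List.map_map,
      pX, ← ih]
    simp [Function.comp_def]

lemma lV_mul_rV (n : ℕ) (w : List ℕ) (hw : ∀ i ∈ w, 1 ≤ i ∧ i < n) (t : ℕ → ℝ) :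
    lV n w t * rV n w t = 1 := by
  induction w generalizing t with
  | nil => simp [lV, rV]
  | cons i w ih =>
    have hi := hw i (by simp)
    have h := ih (fun j hj => hw j (by simp [hj])) (fun k => t (k + 1))
    simp only [lV, rV]
    rw [Matrix.mul_assoc, ← Matrix.mul_assoc (lV n w _), h, Matrix.one_mul,
      gG_mul_neg hi.1 hi.2]

lemma pX_levi (n : ℕ) (w : List ℕ) (hw : ∀ i ∈ w, 1 ≤ i ∧ i < n) (t : ℕ → ℝ) :
    (pX n w t).submatrix (eE n) (eE n) = fromBlocks (lV n w t) 0 0 (rV n w t)ᵀ := by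
  induction w generalizing t with
  | nil => simp [lV, rV, pX, Matrix.fromBlocks_one]
  | cons i w ih =>
    have hi := hw i (by simp)
    have h := ih (fun j hj => hw j (by simp [hj])) (fun k => t (k + 1))
    simp only [lV, rV, pX]
    rw [← Matrix.submatrix_mul_equiv _ _ _ (eE n) _, h, xMat_levi hi.1 hi.2,
      Matrix.fromBlocks_multiply]
    simp [Matrix.transpose_mul]

/-- rows `p < b-1` are untouched if all letters are `≥ b`. -/
lemma rV_row (n b : ℕ) (w : List ℕ) (hw : ∀ i ∈ w, 1 ≤ i ∧ i < n) (hb : ∀ i ∈ w, b ≤ i)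
    (t : ℕ → ℝ) (p q : Fin n) (hp : (p : ℕ) + 1 < b) :
    rV n w t p q = if (p : ℕ) = q then 1 else 0 := by
  induction w generalizing t q with
  | nil => simp [rV, Matrix.one_apply, Fin.ext_iff]
  | cons i w ih =>
    have hi := hw i (by simp)
    have hbi := hb i (by simp)
    have h := ih (fun j hj => hw j (by simp [hj])) (fun j hj => hb j (by simp [hj]))
    simp only [rV]
    rw [mul_gG_apply _ _ ⟨i - 1, by omega⟩ (by simp; omega), h, h,
      if_neg (c := (p : ℕ) = ((⟨i - 1, by omega⟩ : Fin n) : ℕ))]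
    · simp
    · simp; omega

/-- columns `q > a` are untouched if all letters are `≤ a`. -/
lemma rV_col (n a : ℕ) (w : List ℕ) (hw : ∀ i ∈ w, 1 ≤ i ∧ i < n) (hb : ∀ i ∈ w, i ≤ a)
    (t : ℕ → ℝ) (p q : Fin n) (hq : a < (q : ℕ)) :
    rV n w t p q = if (p : ℕ) = q then 1 else 0 := by
  induction w generalizing t with
  | nil => simp [rV, Matrix.one_apply, Fin.ext_iff]
  | cons i w ih =>
    have hi := hw i (by simp)
    have hbi := hb i (by simp)
    have h := ih (fun j hj => hw j (by simp [hj])) (fun j hj => hb j (by simp [hj]))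
    simp only [rV]
    rw [mul_gG_apply _ _ ⟨i - 1, by omega⟩ (by simp; omega), h, if_neg (c := (q : ℕ) = i)]
    · simp
    · omega

lemma mem_decRun {a b i : ℕ} (h : i ∈ decRun a b) : b ≤ i ∧ i ≤ a := by
  simp [decRun, List.mem_range'_1] at h
  omega

lemma decRun_length (a b : ℕ) : (decRun a b).length = a + 1 - b := by
  simp [decRun]

lemma decRun_succ (b l : ℕ) : decRun (b + l) b = (b + l) :: (List.range' b l).reverse := by
  have : b + l + 1 - b = l + 1 := by omega
  rw [decRun, this, List.range'_1_concat]
  simp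

lemma rV_run_aux (n b l : ℕ) (hb : 1 ≤ b) (hl : b + l ≤ n) (t : ℕ → ℝ) (p q : Fin n)
    (hp : (p : ℕ) + 1 = b) (hq : (q : ℕ) + 1 = b + l) :
    rV n (List.range' b l).reverse t p q = ∏ i ∈ Finset.range l, -(t i) := by
  induction l generalizing t q with
  | zero =>
    have : p = q := Fin.ext (by omega)
    simp [rV, this]
  | succ l ih =>
    rw [List.range'_1_concat]
    simp only [List.reverse_append, List.reverse_cons, List.reverse_nil, List.nil_append,
      List.singleton_append, rV]
    have hk : b + l - 1 < n := by omega
    rw [mul_gG_apply _ _ ⟨b + l - 1, hk⟩ (by simp; omega), if_pos (by omega),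
      ih (by omega) _ ⟨b + l - 1, hk⟩ (by simp only []; omega), Finset.prod_range_succ',
      rV_col n (b + l - 1) _ _ _ _ p q (by omega), if_neg (by omega)]
    · simp
    · intro i hi
      simp [List.mem_range'_1] at hi
      omega
    · intro i hi
      simp [List.mem_range'_1] at hi
      omega

lemma rV_run (n a b : ℕ) (hb : 1 ≤ b) (hab : b ≤ a + 1) (ha : a < n) (t : ℕ → ℝ) (p q : Fin n)
    (hp : (p : ℕ) + 1 = b) (hq : (q : ℕ) = a) :
    rV n (decRun a b) t p q = ∏ i ∈ Finset.range (decRun a b).length, -(t i) := by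
  rw [decRun_length, decRun]
  exact rV_run_aux n b _ hb (by omega) t p q hp (by omega)

lemma nN_conj {n : ℕ} (Z : Matrix (Fin n) (Fin n) ℝ) (a b : Fin n) (ha : (a : ℕ) + 2 = n)
    (hb : (b : ℕ) + 1 = n) (p q : Fin n) :
    (Z * nN n * Zᵀ) p q = Z p a * Z q b - Z p b * Z q a := by
  have h : nN n = Matrix.single a b 1 - Matrix.single b a 1 := by
    ext i j
    simp only [nN, Matrix.of_apply, Matrix.sub_apply, Matrix.single_apply, Fin.ext_iff]
    congr 1 <;> congr 1 <;> apply propext <;> omega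
  rw [h, Matrix.mul_sub, Matrix.sub_mul, Matrix.sub_apply]
  congr 1
  · rw [Matrix.mul_apply, Finset.sum_eq_single b]
    · simp
    · intro c _ hc
      simp [Matrix.mul_single_apply_of_ne (hbj := hc)]
    · simp
  · rw [Matrix.mul_apply, Finset.sum_eq_single a]
    · simp
    · intro c _ hc
      simp [Matrix.mul_single_apply_of_ne (hbj := hc)]
    · simp

lemma row_delta_mul {n : ℕ} (Z R : Matrix (Fin n) (Fin n) ℝ) (p q : Fin n)
    (h : ∀ q : Fin n, Z p q = if (p : ℕ) = q then 1 else 0) : (Z * R) p q = R p q := by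
  rw [Matrix.mul_apply, Finset.sum_eq_single p]
  · simp [h]
  · intro c _ hc
    rw [h, if_neg (fun e => hc (Fin.ext e.symm)), zero_mul]
  · simp

lemma col_delta_mul {n : ℕ} (Z R : Matrix (Fin n) (Fin n) ℝ) (p q : Fin n)
    (h : ∀ p : Fin n, R p q = if (p : ℕ) = q then 1 else 0) : (Z * R) p q = Z p q := by
  rw [Matrix.mul_apply, Finset.sum_eq_single q]
  · simp [h]
  · intro c _ hc
    rw [h, if_neg (fun e => hc (Fin.ext e)), mul_zero]
  · simp

def blk (n m : ℕ) : List ℕ := n :: (decRun (n - 2) (2 * m + 1) ++ decRun (n - 1) (2 * m + 2))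

def tailW (n m k : ℕ) : List ℕ := ((List.range' m k).map (blk n)).flatten

lemma tailW_succ (n m k : ℕ) : tailW n m (k + 1) = blk n m ++ tailW n (m + 1) k := by
  simp [tailW, List.range'_succ]

lemma tailW_length (n k m : ℕ) (h : m + k = n / 2) :
    2 * (tailW n m k).length + (n - 2 * m) = (n - 2 * m) * (n - 2 * m) := by
  induction k generalizing m with
  | zero =>
    have : n - 2 * m = 0 ∨ n - 2 * m = 1 := by omega
    rcases this with h | h <;> simp [tailW, h]
  | succ k ih =>
    have := ih (m + 1) (by omega)
    obtain ⟨K, hK⟩ : ∃ K, n = 2 * m + 2 + K := ⟨n - 2 * m - 2, by omega⟩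
    have e1 : n - 2 * (m + 1) = K := by omega
    have e2 : n - 2 * m = K + 2 := by omega
    rw [e1] at this
    rw [e2, tailW_succ, List.length_append, blk, List.length_cons, List.length_append,
      decRun_length, decRun_length]
    have e3 : n - 2 + 1 - (2 * m + 1) = K := by omega
    have e4 : n - 1 + 1 - (2 * m + 2) = K := by omega
    rw [e3, e4]
    nlinarith

lemma wordD_eq (n : ℕ) : wordD n = tailW n 0 (n / 2) := by
  simp [wordD, tailW, blk, List.range_eq_range', Function.comp_def]
  rfl

lemma wordD_length (n : ℕ) : (wordD n).length = Npar n := by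
  have := tailW_length n (n / 2) 0 (by omega)
  rw [← wordD_eq] at this
  simp only [Nat.mul_zero, Nat.sub_zero] at this
  rw [Npar, Nat.mul_sub, Nat.mul_one]
  omega

lemma blk_step (n m : ℕ) (hm : 2 * m + 1 < n) (t : ℕ → ℝ) :
    ∃ (a b : Matrix (Fin n) (Fin n) ℝ),
      (pX n (blk n m) t).submatrix (eE n) (eE n) = fromBlocks a (t 0 • (nN n * bᵀ)) 0 bᵀ ∧
      a * b = 1 ∧
      (∀ p q : Fin n, (p : ℕ) < 2 * m → b p q = if (p : ℕ) = q then 1 else 0) ∧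
      (b ⟨2 * m, by omega⟩ ⟨n - 1, by omega⟩ = 0) ∧
      (t 0 * (b ⟨2 * m, by omega⟩ ⟨n - 2, by omega⟩ * b ⟨2 * m + 1, hm⟩ ⟨n - 1, by omega⟩)) ^ 2
        = (∏ i ∈ Finset.range (blk n m).length, t i) ^ 2 := by
  set w1 := decRun (n - 2) (2 * m + 1) with hw1
  set w2 := decRun (n - 1) (2 * m + 2) with hw2
  set s : ℕ → ℝ := fun k => t (k + 1) with hs
  set s' : ℕ → ℝ := fun k => s (k + w1.length) with hs'
  have h1 : ∀ i ∈ w1, 1 ≤ i ∧ i < n := by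
    intro i hi; have := mem_decRun hi; omega
  have h2 : ∀ i ∈ w2, 1 ≤ i ∧ i < n := by
    intro i hi; have := mem_decRun hi; omega
  have h12 : ∀ i ∈ w1 ++ w2, 1 ≤ i ∧ i < n := by
    intro i hi
    rcases List.mem_append.1 hi with hi | hi
    · exact h1 i hi
    · exact h2 i hi
  have hb12 : ∀ i ∈ w1 ++ w2, 2 * m + 1 ≤ i := by
    intro i hi
    rcases List.mem_append.1 hi with hi | hi <;> have := mem_decRun hi <;> omega
  have hrow : ∀ q, rV n (w1 ++ w2) s ⟨2 * m, by omega⟩ q = rV n w1 s ⟨2 * m, by omega⟩ q := by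
    intro q
    rw [rV_append]
    apply row_delta_mul
    intro q
    exact rV_row n (2 * m + 2) w2 h2 (fun i hi => (mem_decRun hi).1) _ _ _ (by simp)
  have hcol : ∀ p, rV n (w1 ++ w2) s p ⟨n - 1, by omega⟩ = rV n w2 s' p ⟨n - 1, by omega⟩ := by
    intro p
    rw [rV_append]
    apply col_delta_mul
    intro p
    exact rV_col n (n - 2) w1 h1 (fun i hi => (mem_decRun hi).2) _ _ _ (by simp; omega)
  refine ⟨lV n (w1 ++ w2) s, rV n (w1 ++ w2) s, ?_, lV_mul_rV n _ h12 s, ?_, ?_, ?_⟩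
  · rw [blk, pX, ← Matrix.submatrix_mul_equiv _ _ _ (eE n) _, xMat_top (by omega),
      pX_levi n _ h12, Matrix.fromBlocks_multiply]
    simp [hs]
  · intro p q hp
    exact rV_row n (2 * m + 1) _ h12 hb12 _ _ _ (by omega)
  · rw [hrow, rV_col n (n - 2) w1 h1 (fun i hi => (mem_decRun hi).2) _ _ _ (by simp; omega),
      if_neg (by simp; omega)]
  · rw [hrow, hcol, rV_run n (n - 2) (2 * m + 1) (by omega) (by omega) (by omega) _ _ _ rfl rfl,
      rV_run n (n - 1) (2 * m + 2) (by omega) (by omega) (by omega) _ _ _ rfl rfl,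
      blk, List.length_cons, List.length_append, Finset.prod_range_succ', Finset.prod_range_add]
    simp only [mul_pow, ← Finset.prod_pow, neg_sq, hs', hs, hw1]
    rw [mul_comm]
    congr 2
    apply Finset.prod_congr rfl
    intro i _
    rw [Nat.add_comm i]

lemma main_step (n : ℕ) (k m : ℕ) (hmk : m + k = n / 2) (t : ℕ → ℝ) :
    ∃ (Y Z : Matrix (Fin n) (Fin n) ℝ) (d : ℕ → ℝ) (u v : ℕ → ℕ → ℝ),
      (pX n (tailW n m k) t).submatrix (eE n) (eE n) =
        fromBlocks Y (Y * Matrix.of fun p q : Fin n =>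
          ∑ j ∈ Finset.Ico m (m + k), d j * (u j p * v j q - v j p * u j q)) 0 Zᵀ ∧
      Y * Z = 1 ∧
      (∀ p q : Fin n, (p : ℕ) < 2 * m → Z p q = if (p : ℕ) = q then 1 else 0) ∧
      (∀ j ∈ Finset.Ico m (m + k), (∀ p < 2 * j, u j p = 0) ∧ (∀ p < 2 * j + 1, v j p = 0)) ∧
      ∏ j ∈ Finset.Ico m (m + k), (d j * (u j (2 * j) * v j (2 * j + 1))) ^ 2
        = (∏ i ∈ Finset.range (tailW n m k).length, t i) ^ 2 := by
  induction k generalizing m t with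
  | zero =>
    refine ⟨1, 1, 0, 0, 0, ?_, by simp, ?_, by simp, by simp [tailW]⟩
    · have : (Matrix.of fun p q : Fin n => (0 : ℝ)) = 0 := rfl
      simp [tailW, pX, this, Matrix.fromBlocks_one]
    · intro p q _
      simp [Matrix.one_apply, Fin.ext_iff]
  | succ k ih =>
    obtain ⟨Y, Z, d, u, v, hP, hYZ, hZ, htri, hprod⟩ :=
      ih (m + 1) (by omega) (fun i => t (i + (blk n m).length))
    have hm : 2 * m + 1 < n := by omega
    obtain ⟨a, b, hB, hab, hb, hb0, hbp⟩ := blk_step n m hm t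
    have hZb : ∀ p q : Fin n, (p : ℕ) < 2 * (m + 1) → (Z * b) p q = b p q := by
      intro p q hp
      exact row_delta_mul _ _ _ _ (fun q => hZ p q hp)
    have hinv : a * Y * (Z * b) = 1 := by
      rw [Matrix.mul_assoc, ← Matrix.mul_assoc Y, hYZ, Matrix.one_mul, hab]
    set U : ℕ → ℝ := fun p => if h : p < n then (Z * b) ⟨p, h⟩ ⟨n - 2, by omega⟩ else 0 with hU
    set V : ℕ → ℝ := fun p => if h : p < n then (Z * b) ⟨p, h⟩ ⟨n - 1, by omega⟩ else 0 with hV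
    have hIco : Finset.Ico (m + 1) (m + (k + 1)) = Finset.Ico (m + 1) (m + 1 + k) := by
      congr 1; omega
    have hne : ∀ j ∈ Finset.Ico (m + 1) (m + 1 + k), j ≠ m := by
      intro j hj; have := Finset.mem_Ico.1 hj; omega
    refine ⟨a * Y, Z * b, Function.update d m (t 0), Function.update u m U,
      Function.update v m V, ?_, hinv, ?_, ?_, ?_⟩
    · rw [tailW_succ, pX_append, ← Matrix.submatrix_mul_equiv _ _ _ (eE n) _, hB, hP,
        Matrix.fromBlocks_multiply]
      have key : (Matrix.of fun p q : Fin n =>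
          ∑ j ∈ Finset.Ico m (m + (k + 1)), Function.update d m (t 0) j *
            (Function.update u m U j p * Function.update v m V j q -
              Function.update v m V j p * Function.update u m U j q)) =
          t 0 • ((Z * b) * nN n * (Z * b)ᵀ) + Matrix.of fun p q : Fin n =>
          ∑ j ∈ Finset.Ico (m + 1) (m + 1 + k), d j * (u j p * v j q - v j p * u j q) := by
        ext p q
        rw [Matrix.of_apply, Finset.sum_eq_sum_Ico_succ_bot (by omega), Matrix.add_apply,
          Matrix.smul_apply, nN_conj (Z * b) ⟨n - 2, by omega⟩ ⟨n - 1, by omega⟩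
            (by simp; omega) (by simp; omega), hIco, Matrix.of_apply]
        congr 1
        · simp [hU, hV]
        · apply Finset.sum_congr rfl
          intro j hj
          simp [hne j hj]
      rw [key, Matrix.mul_add]
      have e1 : a * Y * (t 0 • (Z * b * nN n * (Z * b)ᵀ)) = t 0 • (nN n * bᵀ) * Zᵀ := by
        rw [Matrix.mul_smul, Matrix.mul_assoc (Z * b), ← Matrix.mul_assoc (a * Y), hinv,
          Matrix.one_mul, Matrix.transpose_mul, Matrix.smul_mul, Matrix.mul_assoc]
      rw [e1]
      simp [Matrix.mul_assoc, Matrix.transpose_mul, add_comm]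
    · intro p q hp
      rw [hZb p q (by omega), hb p q hp]
    · intro j hj
      by_cases hjm : j = m
      · subst hjm
        simp only [Function.update_self, hU, hV]
        constructor
        · intro p hp
          rw [dif_pos (by omega), hZb _ _ (by simp; omega), hb _ _ (by simpa using hp),
            if_neg (by simp; omega)]
        · intro p hp
          rw [dif_pos (by omega), hZb _ _ (by simp; omega)]
          rcases Nat.lt_succ_iff_lt_or_eq.1 hp with hp | hp
          · rw [hb _ _ (by simpa using hp), if_neg (by simp; omega)]
          · subst hp; exact hb0
      · simp only [Function.update_of_ne hjm]
        apply htri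
        have := Finset.mem_Ico.1 hj
        exact Finset.mem_Ico.2 (by omega)
    · rw [Finset.prod_eq_prod_Ico_succ_bot (by omega), tailW_succ, List.length_append,
        Finset.prod_range_add, mul_pow (∏ i ∈ Finset.range _, _), ← hbp, hIco]
      congr 1
      · simp only [Function.update_self, hU, hV]
        rw [dif_pos (by omega), dif_pos hm, hZb _ _ (by simp), hZb _ _ (by simp; omega)]
      · simp only [Nat.add_comm (blk n m).length]
        rw [← hprod]
        apply Finset.prod_congr rfl
        intro j hj
        simp [hne j hj]

lemma det_sum (r : ℕ) (d : ℕ → ℝ) (u v : ℕ → ℕ → ℝ)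
    (htri : ∀ j ∈ Finset.range r, (∀ p < 2 * j, u j p = 0) ∧ (∀ p < 2 * j + 1, v j p = 0)) :
    (Matrix.of fun p q : Fin (r * 2) =>
      ∑ j ∈ Finset.range r, d j * (u j p * v j q - v j p * u j q)).det
    = ∏ j ∈ Finset.range r, (d j * (u j (2 * j) * v j (2 * j + 1))) ^ 2 := by
  let e : Fin 2 × Fin r ≃ Fin (r * 2) := (Equiv.prodComm _ _).trans finProdFinEquiv
  have he : ∀ x, ((e x : Fin (r * 2)) : ℕ) = x.1 + 2 * x.2 := by
    intro x; simp [e]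
  let W : Matrix (Fin (r * 2)) (Fin 2 × Fin r) ℝ :=
    Matrix.of fun p x => if x.1 = 0 then u x.2 p else v x.2 p
  let D : Matrix (Fin 2 × Fin r) (Fin 2 × Fin r) ℝ :=
    Matrix.blockDiagonal fun j : Fin r => !![0, d j; -d j, 0]
  have hfac : (Matrix.of fun p q : Fin (r * 2) =>
      ∑ j ∈ Finset.range r, d j * (u j p * v j q - v j p * u j q)) = W * D * Wᵀ := by
    ext p q
    have hWD : ∀ y : Fin 2 × Fin r, (W * D) p y =
        if y.1 = 0 then - (d y.2 * v y.2 p) else d y.2 * u y.2 p := by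
      rintro ⟨y1, y2⟩
      rw [Matrix.mul_apply, Fintype.sum_prod_type_right, Finset.sum_eq_single y2]
      · fin_cases y1 <;> simp [W, D, Matrix.blockDiagonal_apply, mul_comm]
      · intro c _ hc
        simp [D, Matrix.blockDiagonal_apply, hc]
      · simp
    rw [Matrix.mul_apply, Fintype.sum_prod_type_right, Matrix.of_apply, Finset.sum_range]
    apply Finset.sum_congr rfl
    intro j _
    simp [hWD, W]
    ring
  have hfac2 : W * D * Wᵀ = W.submatrix id e.symm * D.submatrix e.symm e.symm *
      (W.submatrix id e.symm)ᵀ := by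
    rw [Matrix.submatrix_mul_equiv, Matrix.transpose_submatrix, Matrix.submatrix_mul_equiv]
    simp
  have hWdet : (W.submatrix id e.symm).det =
      ∏ j ∈ Finset.range r, (u j (2 * j) * v j (2 * j + 1)) := by
    rw [Matrix.det_of_lowerTriangular, ← Equiv.prod_comp e, Fintype.prod_prod_type_right,
      Finset.prod_range]
    · apply Finset.prod_congr rfl
      intro j _
      simp [W, he, Nat.add_comm]
    · intro p q hpq
      have hpq' : (p : ℕ) < q := hpq
      obtain ⟨⟨y1, y2⟩, rfl⟩ := e.surjective q
      have h2 := htri y2 (by simp)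
      rw [he] at hpq'
      fin_cases y1
      · simp [W]; exact h2.1 _ (by simpa using hpq')
      · simp [W]; exact h2.2 _ (by simp at hpq'; omega)
  have hDdet : D.det = ∏ j ∈ Finset.range r, (d j) ^ 2 := by
    rw [Matrix.det_blockDiagonal, Finset.prod_range]
    apply Finset.prod_congr rfl
    intro j _
    simp [Matrix.det_fin_two, sq]
  rw [hfac, hfac2, Matrix.det_mul, Matrix.det_mul, Matrix.det_transpose, hWdet,
    Matrix.det_submatrix_equiv_self, hDdet, ← Finset.prod_mul_distrib, ← Finset.prod_mul_distrib]
  apply Finset.prod_congr rfl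
  intro j _
  ring

lemma Amat_formula (n : ℕ) (t : ℕ → ℝ) :
    ∃ (d : ℕ → ℝ) (u v : ℕ → ℕ → ℝ),
      (Amat n t = Matrix.of fun p q : Fin n =>
          ∑ j ∈ Finset.range (n / 2), d j * (u j p * v j q - v j p * u j q)) ∧
      (∀ j ∈ Finset.range (n / 2), (∀ p < 2 * j, u j p = 0) ∧ (∀ p < 2 * j + 1, v j p = 0)) ∧
      ∏ j ∈ Finset.range (n / 2), (d j * (u j (2 * j) * v j (2 * j + 1))) ^ 2
        = (∏ i ∈ Finset.range (Npar n), t i) ^ 2 := by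
  obtain ⟨Y, Z, d, u, v, hP, hYZ, -, htri, hprod⟩ := main_step n (n / 2) 0 (by omega) t
  rw [← wordD_eq] at hP hprod
  rw [wordD_length] at hprod
  simp only [Nat.zero_add, ← Finset.range_eq_Ico] at hP hprod htri
  have hX : pX n (wordD n) t = prodX n t := by
    rw [← pX_eq, wordD_length, prodX]
  rw [hX] at hP
  refine ⟨d, u, v, ?_, htri, hprod⟩
  have h1 : X1 n t = Y := by
    ext p q
    have := congrFun (congrFun hP (Sum.inl p)) (Sum.inl q)
    rw [fromBlocks_apply₁₁] at this
    rw [← this, X1, Matrix.of_apply, Matrix.submatrix_apply]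
    congr 1 <;> apply Fin.ext <;> simp [eE_inl]
  have h2 : X2 n t = Y * Matrix.of fun p q : Fin n =>
      ∑ j ∈ Finset.range (n / 2), d j * (u j p * v j q - v j p * u j q) := by
    ext p q
    have := congrFun (congrFun hP (Sum.inl p)) (Sum.inr q)
    rw [fromBlocks_apply₁₂] at this
    rw [X2, Matrix.of_apply]
    refine Eq.trans ?_ this
    rw [Matrix.submatrix_apply]
    congr 1 <;> apply Fin.ext <;> simp [eE_inl, eE_inr]
  rw [Amat, h1, h2, ← Matrix.mul_assoc, Matrix.inv_eq_right_inv hYZ,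
    _root_.mul_eq_one_comm.1 hYZ, Matrix.one_mul]

lemma det_sum' (n r : ℕ) (hn : n = r * 2) (d : ℕ → ℝ) (u v : ℕ → ℕ → ℝ)
    (htri : ∀ j ∈ Finset.range r, (∀ p < 2 * j, u j p = 0) ∧ (∀ p < 2 * j + 1, v j p = 0)) :
    (Matrix.of fun p q : Fin n =>
      ∑ j ∈ Finset.range r, d j * (u j p * v j q - v j p * u j q)).det
    = ∏ j ∈ Finset.range r, (d j * (u j (2 * j) * v j (2 * j + 1))) ^ 2 := by
  subst hn
  exact det_sum r d u v htri

/-- If `n` is even then `det(A(t)) = (t_1⋯t_N)²`; if `n` is odd then the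
leading principal `(n-1) × (n-1)` minor of `A(t)` equals `(t_1⋯t_N)²`. -/
theorem det_Amat_eq_square (n : ℕ) (hn : 2 ≤ n) (t : ℕ → ℝ) :
    (Even n → (Amat n t).det = (∏ i ∈ Finset.range (Npar n), t i) ^ 2) ∧
    (Odd n →
      (Matrix.of fun (p q : Fin (n - 1)) =>
        Amat n t ⟨(p : ℕ), by have := p.isLt; omega⟩
          ⟨(q : ℕ), by have := q.isLt; omega⟩).det
      = (∏ i ∈ Finset.range (Npar n), t i) ^ 2) := by
  obtain ⟨d, u, v, hA, htri, hprod⟩ := Amat_formula n t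
  rw [hA, ← hprod]
  constructor
  · intro he
    exact det_sum' n (n / 2) (by obtain ⟨k, rfl⟩ := he; omega) d u v htri
  · intro ho
    exact det_sum' (n - 1) (n / 2) (by obtain ⟨k, rfl⟩ := ho; omega) d u v htri
end
end

section
/- There exist integers c_{j,k,i}, indexed by pairs (j,k) with 1 ≤ j ≤ k ≤ n−1 and by 1 ≤ i ≤ N, such that for every t = (t_1,…,t_N) ∈ (0,∞)^N and every 1 ≤ i ≤ N, one has t_i = ∏_{1 ≤ j ≤ k ≤ n−1} M_{j,k}(A(t))^{c_{j,k,i}} (an integer-power product of positive real numbers). In particular, the parameters t_1,…,t_N are Laurent monomials in the minors M_{j,k}(A(t)). -/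
noncomputable section

open Matrix

def DD (m : ℕ) (F : ℕ → ℕ → ℝ) : ℝ := Matrix.det (Matrix.of fun p q : Fin m => F p q)

lemma DD_congr {m : ℕ} {F G : ℕ → ℕ → ℝ} (h : ∀ p < m, ∀ q < m, F p q = G p q) :
    DD m F = DD m G := by
  unfold DD
  congr 1
  ext p q
  exact h p p.2 q q.2

lemma DD_zero (F : ℕ → ℕ → ℝ) : DD 0 F = 1 := by simp [DD]

lemma DD_expand_last (m r : ℕ) (hr : r ≤ m) (F : ℕ → ℕ → ℝ)
    (h : ∀ p ≤ m, p ≠ r → F p m = 0) :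
    DD (m + 1) F = (-1) ^ (r + m) * F r m * DD m (fun p q => F (if p < r then p else p + 1) q) := by
  unfold DD
  rw [Matrix.det_succ_column _ (Fin.last m)]
  rw [Finset.sum_eq_single (⟨r, by omega⟩ : Fin (m + 1))]
  · simp only [Matrix.of_apply, Fin.val_last]
    congr 2
    ext p q
    simp only [Matrix.submatrix_apply, Matrix.of_apply, Fin.succAbove_last, Fin.val_castSucc]
    congr 1
    simp only [Fin.succAbove, Fin.lt_def, Fin.val_castSucc]
    split_ifs <;> simp
  · intro b _ hb
    have : F b m = 0 := h b (by have := b.2; omega) (fun e => hb (Fin.ext e))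
    simp [this]
  · simp

lemma DD_expand_first (m : ℕ) (F : ℕ → ℕ → ℝ)
    (h : ∀ p < m, F p 0 = 0) :
    DD (m + 1) F = (-1) ^ m * F m 0 * DD m (fun p q => F p (q + 1)) := by
  unfold DD
  rw [Matrix.det_succ_column_zero]
  rw [Finset.sum_eq_single (Fin.last m)]
  · simp only [Matrix.of_apply, Fin.val_last]
    congr 2
    ext p q
    simp [Matrix.submatrix_apply]
  · intro b _ hb
    have : F b 0 = 0 := h b (by
      have := b.2
      have h2 : (b : ℕ) ≠ m := fun e => hb (Fin.ext e)
      omega)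
    simp [this]
  · simp

lemma lemE (a b j : ℕ) (F : ℕ → ℕ → ℝ) :
    DD (a + b + j) (fun p q => if q < a + b then F p q else
      if p = a + (q - (a + b)) then 1 else 0) =
    (-1) ^ (b * j) * DD (a + b) (fun p q => F (if p < a then p else p + j) q) := by
  induction j generalizing F with
  | zero =>
    simp only [mul_zero, pow_zero, one_mul, add_zero]
    apply DD_congr
    intro p hp q hq
    simp [hq]
  | succ j ih =>
    rw [← add_assoc, DD_expand_last _ (a + j) (by omega)]
    · have h1 : DD (a + b + j) (fun p q => (fun p q => if q < a + b then F p q else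
          if p = a + (q - (a + b)) then 1 else 0) (if p < a + j then p else p + 1) q) =
          DD (a + b + j) (fun p q => if q < a + b then
            F (if p < a + j then p else p + 1) q else
          if p = a + (q - (a + b)) then 1 else 0) := by
        apply DD_congr
        intro p hp q hq
        by_cases h : q < a + b
        · simp [h]
        · simp only [h, if_false]
          congr 1
          apply propext
          split_ifs <;> omega
      rw [h1, ih (fun p q => F (if p < a + j then p else p + 1) q)]
      have h2 : ¬ (a + b + j < a + b) := by omega
      have h3 : a + j = a + (a + b + j - (a + b)) := by omega
      simp only [h2, if_false, h3.symm, if_true]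
      have h4 : DD (a + b) (fun p q => F (if (if p < a then p else p + j) < a + j then
          (if p < a then p else p + j) else (if p < a then p else p + j) + 1) q)
          = DD (a + b) (fun p q => F (if p < a then p else p + (j + 1)) q) := by
        apply DD_congr
        intro p hp q hq
        congr 1
        split_ifs <;> omega
      rw [h4, mul_one, ← mul_assoc, ← pow_add]
      congr 1
      have : a + j + (a + b + j) + b * j = 2 * (a + j) + (b * (j + 1)) := by ring
      rw [this, pow_add, pow_mul]
      simp
    · intro p hp hne
      have h2 : ¬ (a + b + j < a + b) := by omega
      have h3 : ¬ (p = a + (a + b + j - (a + b))) := by omega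
      simp only [h2, if_false, h3]

lemma lemF (c j : ℕ) (G : ℕ → ℕ → ℝ)
    (h : ∀ p q, q < c → p + q + 1 < c + j → G p q = 0) :
    DD (c + j) G = (∏ i ∈ Finset.range c, (-1) ^ (c + j - 1 - i) * G (c + j - 1 - i) i) *
      DD j (fun p q => G p (q + c)) := by
  induction c generalizing G with
  | zero => simp
  | succ c ih =>
    rw [show c + 1 + j = (c + j) + 1 by ring, DD_expand_first]
    · rw [ih (fun p q => G p (q + 1)) (fun p q h1 h2 => h p (q + 1) (by omega) (by omega))]
      rw [Finset.prod_range_succ']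
      have : ∀ i, c + j + 1 - 1 - (i + 1) = c + j - 1 - i := fun i => by omega
      simp only [this]
      have h5 : (fun p q => G p (q + c + 1)) = (fun p q => G p (q + (c + 1))) := rfl
      rw [h5]
      simp only [Nat.add_sub_cancel, Nat.sub_zero]
      ring
    · intro p hp
      exact h p 0 (by omega) (by omega)

lemma DD_lower (m : ℕ) (F : ℕ → ℕ → ℝ) (h : ∀ p q, p < q → q < m → F p q = 0) :
    DD m F = ∏ i ∈ Finset.range m, F i i := by
  unfold DD
  rw [Matrix.det_of_isLowerTriangular]
  · simp [Finset.prod_range]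
  · intro p q hpq
    exact h p q (by simpa using hpq) q.2

lemma DD_upper (m : ℕ) (F : ℕ → ℕ → ℝ) (h : ∀ p q, q < p → p < m → F p q = 0) :
    DD m F = ∏ i ∈ Finset.range m, F i i := by
  unfold DD
  rw [Matrix.det_of_isUpperTriangular]
  · simp [Finset.prod_range]
  · intro p q hpq
    exact h p q (by simpa using hpq) p.2

/-- adding multiples of previous columns -/
lemma DD_addcol (m : ℕ) (F : ℕ → ℕ → ℝ) (c : ℕ → ℝ) :
    DD m (fun p q => F p q + if q = 0 then 0 else c q * F p (q - 1)) = DD m F := by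
  have key : (Matrix.of fun p q : Fin m => F p q + if (q : ℕ) = 0 then 0 else c q * F p (q - 1))
      = (Matrix.of fun p q : Fin m => F p q) *
        (Matrix.of fun p q : Fin m => (if p = q then 1 else 0) +
          (if (q : ℕ) = p + 1 then c q else 0)) := by
    ext p q
    simp only [Matrix.of_apply, Matrix.mul_apply, mul_add, Finset.sum_add_distrib]
    congr 1
    · simp
    · split_ifs with hq
      · symm
        apply Finset.sum_eq_zero
        intro x _
        rw [if_neg (by omega)]
        simp
      · rw [Finset.sum_eq_single (⟨q - 1, by omega⟩ : Fin m)]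
        · simp only
          rw [if_pos (by omega)]
          ring
        · intro b _ hb
          rw [if_neg]
          · simp
          · intro e
            apply hb
            ext
            simp
            omega
        · simp
  unfold DD
  rw [key, Matrix.det_mul]
  rw [Matrix.det_of_isUpperTriangular (M := Matrix.of fun p q : Fin m => (if p = q then (1:ℝ) else 0) +
          (if (q : ℕ) = p + 1 then c q else 0))]
  · simp
  · intro p q hpq
    have : q < p := by simpa using hpq
    simp only [Matrix.of_apply]
    rw [if_neg (by omega), if_neg (by have : (q:ℕ) < p := this; omega)]
    simp

def ent (n : ℕ) (Y : Matrix (Fin (2 * n)) (Fin (2 * n)) ℝ) (p q : ℕ) : ℝ :=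
  if h : p < 2 * n ∧ q < 2 * n then Y ⟨p, h.1⟩ ⟨q, h.2⟩ else 0

lemma ent_mul_single (n : ℕ) (Y : Matrix (Fin (2 * n)) (Fin (2 * n)) ℝ) (p q : ℕ) (x y : ℕ)
    (hx : x < 2 * n) (t : ℝ) :
    ent n (Y * Matrix.of fun a b : Fin (2 * n) => if (a : ℕ) = x ∧ (b : ℕ) = y then t else 0) p q
    = if q < 2 * n ∧ q = y then t * ent n Y p x else 0 := by
  unfold ent
  by_cases hq : q < 2 * n
  · by_cases hp : p < 2 * n
    · simp only [hp, hq, and_self, dif_pos, true_and, Matrix.mul_apply, Matrix.of_apply, hx]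
      by_cases hy : q = y
      · simp only [hy, if_true, and_true]
        rw [Finset.sum_eq_single (⟨x, hx⟩ : Fin (2 * n))]
        · simp [mul_comm]
        · intro b _ hb
          rw [if_neg (fun e => hb (Fin.ext e))]
          simp
        · simp
      · simp [hy]
    · simp [hp]
  · simp [hq]

lemma ent_add (n : ℕ) (Y Z : Matrix (Fin (2 * n)) (Fin (2 * n)) ℝ) (p q : ℕ) :
    ent n (Y + Z) p q = ent n Y p q + ent n Z p q := by
  unfold ent
  split_ifs <;> simp

lemma xMat_lt (n i : ℕ) (hi : 1 ≤ i) (hin : i < n) (t : ℝ) : xMat n i t =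
    1 + (Matrix.of fun a b : Fin (2 * n) => if (a : ℕ) = i - 1 ∧ (b : ℕ) = i then t else 0) +
    (Matrix.of fun a b : Fin (2 * n) => if (a : ℕ) = n + i ∧ (b : ℕ) = n + i - 1 then -t else 0) := by
  ext a b
  simp only [xMat, Matrix.of_apply, Matrix.add_apply, Matrix.one_apply, hin, if_true, Fin.ext_iff]
  rw [← add_assoc]
  congr 1
  · congr 2; apply propext; omega
  · congr 1; apply propext; omega

lemma xMat_eq (n : ℕ) (hn : 2 ≤ n) (t : ℝ) : xMat n n t =
    1 + (Matrix.of fun a b : Fin (2 * n) => if (a : ℕ) = n - 2 ∧ (b : ℕ) = 2 * n - 1 then t else 0) +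
    (Matrix.of fun a b : Fin (2 * n) => if (a : ℕ) = n - 1 ∧ (b : ℕ) = 2 * n - 2 then -t else 0) := by
  ext a b
  simp only [xMat, Matrix.of_apply, Matrix.add_apply, Matrix.one_apply, lt_irrefl, if_false, Fin.ext_iff]
  rw [← add_assoc]
  congr 1
  · congr 2; apply propext; omega
  · congr 1; apply propext; omega

lemma ent_xMat_lt (n i : ℕ) (hi : 1 ≤ i) (hin : i < n) (t : ℝ)
    (Y : Matrix (Fin (2 * n)) (Fin (2 * n)) ℝ) (p q : ℕ) :
    ent n (Y * xMat n i t) p q = ent n Y p q + (if q = i then t * ent n Y p (i - 1) else 0)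
      + (if q = n + i - 1 then -t * ent n Y p (n + i) else 0) := by
  rw [xMat_lt n i hi hin, Matrix.mul_add, Matrix.mul_add, Matrix.mul_one, ent_add, ent_add,
    ent_mul_single _ _ _ _ _ _ (by omega), ent_mul_single _ _ _ _ _ _ (by omega)]
  congr 1
  · congr 2; apply propext; omega
  · congr 1; apply propext; omega

lemma ent_xMat_eq (n : ℕ) (hn : 2 ≤ n) (t : ℝ)
    (Y : Matrix (Fin (2 * n)) (Fin (2 * n)) ℝ) (p q : ℕ) :
    ent n (Y * xMat n n t) p q = ent n Y p q + (if q = 2 * n - 1 then t * ent n Y p (n - 2) else 0)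
      + (if q = 2 * n - 2 then -t * ent n Y p (n - 1) else 0) := by
  rw [xMat_eq n hn, Matrix.mul_add, Matrix.mul_add, Matrix.mul_one, ent_add, ent_add,
    ent_mul_single _ _ _ _ _ _ (by omega), ent_mul_single _ _ _ _ _ _ (by omega)]
  congr 1
  · congr 2; apply propext; omega
  · congr 1; apply propext; omega

/-- letters of run `s` -/
def wl (n s p : ℕ) : ℕ := if p = 0 ∧ s % 2 = 0 then n else n - 1 - p

def offs (n s : ℕ) : ℕ := ∑ i ∈ Finset.range s, (n - 1 - i)

def tau (n : ℕ) (t : ℕ → ℝ) (s q : ℕ) : ℝ := t (offs n s + (n - 1 - q))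

def prun (n s : ℕ) (t : ℕ → ℝ) (r : ℕ) : Matrix (Fin (2 * n)) (Fin (2 * n)) ℝ :=
  ((List.range r).map (fun p => xMat n (wl n s p) (t (offs n s + p)))).prod

def al (n s : ℕ) : ℕ := if s % 2 = 0 then 2 * n - 1 else n - 1
def be (n s : ℕ) : ℕ := if s % 2 = 0 then n - 1 else 2 * n - 1

lemma prun_succ (n s : ℕ) (t : ℕ → ℝ) (r : ℕ) :
    prun n s t (r + 1) = prun n s t r * xMat n (wl n s r) (t (offs n s + r)) := by
  simp [prun, List.range_succ]

lemma prun_spec (n s : ℕ) (hn : 2 ≤ n) (t : ℕ → ℝ) (Y : Matrix (Fin (2 * n)) (Fin (2 * n)) ℝ)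
    (r : ℕ) (hr : r ≤ n - 1) (p : ℕ) :
    (∀ q ≤ n - 2, ent n (Y * prun n s t r) p q = ent n Y p q +
        if n - 1 - q < r then tau n t s q * ent n Y p (q - 1) else 0) ∧
    (ent n (Y * prun n s t r) p (al n s) = ent n Y p (al n s) +
        if 0 < r then tau n t s (n - 1) * ent n Y p (n - 2) else 0) ∧
    (ent n (Y * prun n s t r) p (be n s) = ent n Y p (be n s)) ∧
    (∀ q, q ≤ n - 2 → r ≤ n - 2 - q → ent n (Y * prun n s t r) p (n + q) = ent n Y p (n + q)) ∧
    (∀ q, q < n - 2 → n - 2 - q < r → ent n (Y * prun n s t r) p (n + q) = ent n Y p (n + q)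
        - tau n t s (q + 1) * ent n (Y * prun n s t r) p (n + q + 1)) ∧
    (0 < r → ent n (Y * prun n s t r) p (n + (n - 2)) = ent n Y p (n + (n - 2))
        - tau n t s (n - 1) * ent n Y p (be n s)) := by
  induction r with
  | zero => simp [prun]
  | succ r ih =>
    obtain ⟨h1, h2, h3, h4, h5, h6⟩ := ih (by omega)
    rw [prun_succ, ← Matrix.mul_assoc]
    generalize Y * prun n s t r = Z at *
    rcases Nat.eq_zero_or_pos r with hr0 | hr0
    · subst hr0
      have htau : tau n t s (n - 1) = t (offs n s + 0) := by simp [tau]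
      rw [htau]
      simp only [Nat.not_lt_zero, if_false, add_zero] at h1 h2 h3
      have hZ : ∀ q ≤ n - 2, ent n Z p (n + q) = ent n Y p (n + q) := fun q hq => h4 q hq (by omega)
      generalize t (offs n s + 0) = T
      rcases Nat.mod_two_eq_zero_or_one s with hs | hs
      · have hw : wl n s 0 = n := by simp [wl, hs]
        simp only [hw, al, be, hs, if_true] at *
        simp only [ent_xMat_eq n hn]
        refine ⟨?_, ?_, ?_, ?_, ?_, ?_⟩
        · intro q hq
          rw [if_neg (by omega), if_neg (by omega), if_neg (by omega), h1 q hq]; ring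
        · rw [if_pos trivial, if_neg (by omega), if_pos (by omega), h2, h1 _ le_rfl]; ring
        · rw [if_neg (by omega), if_neg (by omega), h3]; ring
        · intro q hq hq2
          rw [if_neg (by omega), if_neg (by omega), hZ q hq]; ring
        · intro q hq hq2; omega
        · intro _
          rw [if_neg (by omega), if_pos (by omega), hZ _ le_rfl, h3]; ring
      · have hw : wl n s 0 = n - 1 := by simp [wl, hs]
        have hs' : ¬ (s % 2 = 0) := by omega
        simp only [hw, al, be, hs', if_false] at *
        simp only [ent_xMat_lt n (n - 1) (by omega) (by omega)]
        refine ⟨?_, ?_, ?_, ?_, ?_, ?_⟩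
        · intro q hq
          rw [if_neg (by omega), if_neg (by omega), if_neg (by omega), h1 q hq]; ring
        · rw [if_pos trivial, if_neg (by omega), if_pos (by omega), h2, show n - 1 - 1 = n - 2 by omega,
            h1 _ le_rfl]; ring
        · rw [if_neg (by omega), if_neg (by omega), h3]; ring
        · intro q hq hq2
          rw [if_neg (by omega), if_neg (by omega), hZ q hq]; ring
        · intro q hq hq2; omega
        · intro _
          rw [if_neg (by omega), if_pos (by omega), hZ _ le_rfl, show n + (n - 1) = 2 * n - 1 by omega,
            h3]; ring
    · have hw : wl n s r = n - 1 - r := by simp [wl]; omega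
      have hal : al n s = 2 * n - 1 ∨ al n s = n - 1 := by unfold al; split_ifs <;> simp
      have hbe : be n s = 2 * n - 1 ∨ be n s = n - 1 := by unfold be; split_ifs <;> simp
      rw [hw]
      simp only [ent_xMat_lt n (n - 1 - r) (by omega) (by omega)]
      refine ⟨?_, ?_, ?_, ?_, ?_, ?_⟩
      · intro q hq
        rw [if_neg (c := q = n + (n - 1 - r) - 1) (by omega), h1 q hq]
        by_cases hqr : q = n - 1 - r
        · rw [if_neg (by omega), if_pos hqr, if_pos (by omega), h1 _ (by omega), if_neg (by omega)]
          have : tau n t s q = t (offs n s + r) := by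
            unfold tau; congr 2; omega
          rw [this, hqr]; ring
        · rw [if_neg hqr]
          have : (n - 1 - q < r) ↔ (n - 1 - q < r + 1) := by omega
          simp only [this]; ring
      · rw [if_neg (by omega), if_neg (by omega), h2, if_pos hr0, if_pos (by omega)]; ring
      · rw [if_neg (by omega), if_neg (by omega), h3]; ring
      · intro q hq hq2
        rw [if_neg (by omega), if_neg (by omega), h4 q hq (by omega)]; ring
      · intro q hq hq2
        rw [if_neg (by omega), if_neg (c := n + q + 1 = n - 1 - r) (by omega),
          if_neg (c := n + q + 1 = n + (n - 1 - r) - 1) (by omega)]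
        by_cases hqr : n - 2 - q < r
        · rw [if_neg (by omega), h5 q hq hqr]; ring
        · rw [if_pos (by omega), h4 q (by omega) (by omega)]
          have : tau n t s (q + 1) = t (offs n s + r) := by
            unfold tau; congr 2; omega
          rw [this, show n + (n - 1 - r) = n + q + 1 by omega]; ring
      · intro _
        rw [if_neg (by omega), if_neg (by omega), h6 hr0]; ring

lemma run_spec (n s : ℕ) (hn : 2 ≤ n) (hs : s < n - 1) (t : ℕ → ℝ)
    (Y : Matrix (Fin (2 * n)) (Fin (2 * n)) ℝ) (p : ℕ) :
    (∀ q ≤ n - 2, ent n (Y * prun n s t (n - 1 - s)) p q = ent n Y p q +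
        if s < q then tau n t s q * ent n Y p (q - 1) else 0) ∧
    (ent n (Y * prun n s t (n - 1 - s)) p (al n s) = ent n Y p (al n s) +
        tau n t s (n - 1) * ent n Y p (n - 2)) ∧
    (ent n (Y * prun n s t (n - 1 - s)) p (be n s) = ent n Y p (be n s)) ∧
    (∀ q, q < s → ent n (Y * prun n s t (n - 1 - s)) p (n + q) = ent n Y p (n + q)) ∧
    (∀ q, q < n - 2 → s ≤ q → ent n (Y * prun n s t (n - 1 - s)) p (n + q) = ent n Y p (n + q)
        - tau n t s (q + 1) * ent n (Y * prun n s t (n - 1 - s)) p (n + q + 1)) ∧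
    (ent n (Y * prun n s t (n - 1 - s)) p (n + (n - 2)) = ent n Y p (n + (n - 2))
        - tau n t s (n - 1) * ent n Y p (be n s)) := by
  obtain ⟨h1, h2, h3, h4, h5, h6⟩ := prun_spec n s hn t Y (n - 1 - s) (by omega) p
  refine ⟨?_, ?_, h3, ?_, ?_, h6 (by omega)⟩
  · intro q hq
    rw [h1 q hq]
    congr 2
    apply propext; omega
  · rw [h2, if_pos (by omega)]
  · intro q hq
    exact h4 q (by omega) (by omega)
  · intro q hq hsq
    exact h5 q hq (by omega)

def RR (n : ℕ) (t : ℕ → ℝ) (s : ℕ) : Matrix (Fin (2 * n)) (Fin (2 * n)) ℝ :=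
  ((List.range s).map (fun s => prun n s t (n - 1 - s))).prod

lemma RR_succ (n : ℕ) (t : ℕ → ℝ) (s : ℕ) :
    RR n t (s + 1) = RR n t s * prun n s t (n - 1 - s) := by
  simp [RR, List.range_succ]

lemma RR_zero_ent (n : ℕ) (t : ℕ → ℝ) (p q : ℕ) (hp : p < 2 * n) (hq : q < 2 * n) :
    ent n (RR n t 0) p q = if p = q then 1 else 0 := by
  simp [RR, ent, hp, hq, Matrix.one_apply]

lemma inv1 (n : ℕ) (hn : 2 ≤ n) (t : ℕ → ℝ) (s : ℕ) (hs : s ≤ n - 1) (p : ℕ) (hp : p < n) :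
    (∀ q ≤ n - 2, (q < p ∨ p + s < q) → ent n (RR n t s) p q = 0) ∧
    (p ≤ n - 2 → ent n (RR n t s) p p = 1) ∧
    (p + s ≤ n - 2 → ent n (RR n t s) p (p + s) = ∏ x ∈ Finset.range s, tau n t x (p + x + 1)) := by
  induction s with
  | zero =>
    refine ⟨?_, ?_, ?_⟩
    · intro q hq h
      rw [RR_zero_ent _ _ _ _ (by omega) (by omega), if_neg (by omega)]
    · intro h
      rw [RR_zero_ent _ _ _ _ (by omega) (by omega), if_pos rfl]
    · intro h
      rw [RR_zero_ent _ _ _ _ (by omega) (by omega), if_pos (by omega)]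
      simp
  | succ s ih =>
    obtain ⟨h1, h2, h3⟩ := ih (by omega)
    obtain ⟨k1, -⟩ := run_spec n s hn (by omega) t (RR n t s) p
    rw [← RR_succ] at k1
    refine ⟨?_, ?_, ?_⟩
    · intro q hq h
      rw [k1 q hq, h1 q hq (by omega)]
      split_ifs with hsq
      · rw [h1 (q - 1) (by omega) (by omega)]; ring
      · ring
    · intro h
      rw [k1 p h, h2 h]
      split_ifs with hsq
      · rw [h1 (p - 1) (by omega) (by omega)]; ring
      · ring
    · intro h
      rw [k1 _ h, if_pos (by omega), h1 _ h (by omega), show p + (s + 1) - 1 = p + s by omega,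
        h3 (by omega), Finset.prod_range_succ, show p + (s + 1) = p + s + 1 by omega]
      ring

lemma al_be (n s : ℕ) : (al n s = 2 * n - 1 ∧ be n s = n - 1) ∨ (al n s = n - 1 ∧ be n s = 2 * n - 1) := by
  unfold al be; split_ifs <;> simp

lemma be_succ (n s : ℕ) : be n (s + 1) = al n s := by
  unfold al be
  rcases Nat.mod_two_eq_zero_or_one s with h | h
  · rw [if_neg (by omega), if_pos h]
  · rw [if_pos (by omega), if_neg (by omega)]

lemma inv2 (n : ℕ) (hn : 2 ≤ n) (t : ℕ → ℝ) (s : ℕ) (hs : s ≤ n - 1) (p : ℕ) (hp : p + s < n - 1) :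
    ent n (RR n t s) p (al n s) = 0 ∧ ent n (RR n t s) p (be n s) = 0 := by
  induction s with
  | zero =>
    rcases al_be n 0 with ⟨h, h'⟩ | ⟨h, h'⟩ <;> rw [h, h'] <;> constructor <;>
      rw [RR_zero_ent _ _ _ _ (by omega) (by omega), if_neg (by omega)]
  | succ s ih =>
    obtain ⟨h1, h2⟩ := ih (by omega) (by omega)
    obtain ⟨-, k2, k3, -⟩ := run_spec n s hn (by omega) t (RR n t s) p
    rw [← RR_succ] at k2 k3
    rw [h1, (inv1 n hn t s (by omega) p (by omega)).1 _ le_rfl (by omega)] at k2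
    rw [h2] at k3
    have hb : al n (s + 1) = be n s := by
      unfold al be
      rcases Nat.mod_two_eq_zero_or_one s with h | h
      · rw [if_neg (by omega), if_pos h]
      · rw [if_pos (by omega), if_neg (by omega)]
    rw [hb, be_succ, k2, k3]
    simp

lemma inv3 (n : ℕ) (hn : 2 ≤ n) (t : ℕ → ℝ) (s : ℕ) (hs : s ≤ n - 1) :
    ent n (RR n t s) (n - 1) (n - 1) = 1 := by
  induction s with
  | zero => rw [RR_zero_ent _ _ _ _ (by omega) (by omega), if_pos rfl]
  | succ s ih =>
    obtain ⟨-, k2, k3, -⟩ := run_spec n s hn (by omega) t (RR n t s) (n - 1)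
    rw [← RR_succ] at k2 k3
    rw [(inv1 n hn t s (by omega) (n - 1) (by omega)).1 _ le_rfl (by omega)] at k2
    rcases al_be n s with ⟨h, h'⟩ | ⟨h, h'⟩ 
    · rw [h'] at k3; rw [k3, ih (by omega)]
    · rw [h] at k2; rw [k2, ih (by omega)]; ring

lemma inv4 (n : ℕ) (hn : 2 ≤ n) (t : ℕ → ℝ) (s : ℕ) (hs : s ≤ n - 1) :
    ent n (RR n t s) (n - 1 - s) (be n s) = ∏ x ∈ Finset.range s, tau n t x (n - 1 - s + x + 1) := by
  cases s with
  | zero =>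
    have : be n 0 = n - 1 := by simp [be]
    rw [this, RR_zero_ent _ _ _ _ (by omega) (by omega), if_pos (by omega)]
    simp
  | succ s =>
    obtain ⟨-, k2, k3, -⟩ := run_spec n s hn (by omega) t (RR n t s) (n - 1 - (s + 1))
    rw [← RR_succ, (inv2 n hn t s (by omega) (n - 1 - (s + 1)) (by omega)).1] at k2
    have := (inv1 n hn t s (by omega) (n - 1 - (s + 1)) (by omega)).2.2 (by omega)
    rw [show n - 1 - (s + 1) + s = n - 2 by omega] at this
    rw [be_succ, k2, this, Finset.prod_range_succ, show n - 1 - (s + 1) + s + 1 = n - 1 by omega]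
    ring

lemma inv5 (n : ℕ) (hn : 2 ≤ n) (t : ℕ → ℝ) (s : ℕ) (hs : s ≤ n - 1) (p : ℕ) (hp : p < n) (q : ℕ)
    (hq : q ≤ n - 2) (h : p + s < n ∨ p + q + 1 < n) :
    ent n (RR n t s) p (n + q) = 0 := by
  induction s with
  | zero => rw [RR_zero_ent _ _ _ _ (by omega) (by omega), if_neg (by omega)]
  | succ s ih =>
    obtain ⟨-, -, -, k4, k5, k6⟩ := run_spec n s hn (by omega) t (RR n t s) p
    rw [← RR_succ] at k4 k5 k6
    by_cases hqs : q < s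
    · rw [k4 q hqs]; exact ih (by omega) (by omega)
    · have hps : p + s + 1 < n := by omega
      clear ih
      have key : ∀ d q, q + d = n - 2 → s ≤ q → ent n (RR n t (s + 1)) p (n + q) = 0 := by
        have hz : ∀ q ≤ n - 2, ent n (RR n t s) p (n + q) = 0 := by
          clear k4 k5 k6 h hqs hq
          induction s with
          | zero => 
            intro q hq
            rw [RR_zero_ent _ _ _ _ (by omega) (by omega), if_neg (by omega)]
          | succ s ih =>
            obtain ⟨-, -, -, k4, k5, k6⟩ := run_spec n s hn (by omega) t (RR n t s) p
            rw [← RR_succ] at k4 k5 k6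
            have hz := ih (by omega) (by omega)
            have key : ∀ d q, q + d = n - 2 → s ≤ q → ent n (RR n t (s + 1)) p (n + q) = 0 := by
              intro d
              induction d with
              | zero =>
                intro q hq hsq
                rw [show q = n - 2 by omega, k6, hz _ le_rfl,
                  (inv2 n hn t s (by omega) p (by omega)).2]; ring
              | succ d ih =>
                intro q hq hsq
                rw [k5 q (by omega) hsq, hz q (by omega), show n + q + 1 = n + (q + 1) by ring,
                  ih (q + 1) (by omega) (by omega)]; ring
            intro q hq
            by_cases hqs : q < s
            · rw [k4 q hqs, hz q hq]
            · exact key (n - 2 - q) q (by omega) (by omega)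
        intro d
        induction d with
        | zero =>
          intro q hq hsq
          rw [show q = n - 2 by omega, k6, hz _ le_rfl,
            (inv2 n hn t s (by omega) p (by omega)).2]; ring
        | succ d ih =>
          intro q hq hsq
          rw [k5 q (by omega) hsq, hz q (by omega), show n + q + 1 = n + (q + 1) by ring,
            ih (q + 1) (by omega) (by omega)]; ring
      exact key (n - 2 - q) q (by omega) (by omega)

lemma inv6 (n : ℕ) (hn : 2 ≤ n) (t : ℕ → ℝ) (i : ℕ) (s : ℕ) (hs : s ≤ n - 1) (hi : i < s) :
    ent n (RR n t s) (n - 1 - i) (n + i) =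
      (-1) ^ (n - 1 - i) * ((∏ x ∈ Finset.range i, tau n t x (n - 1 - i + x + 1)) *
      ∏ m ∈ Finset.Ico (i + 1) n, tau n t i m) := by
  induction s, hi using Nat.le_induction with
  | base =>
    rw [← inv4 n hn t i (by omega)]
    obtain ⟨-, -, -, k4, k5, k6⟩ := run_spec n i hn (by omega) t (RR n t i) (n - 1 - i)
    rw [← RR_succ] at k4 k5 k6
    have hz : ∀ q ≤ n - 2, ent n (RR n t i) (n - 1 - i) (n + q) = 0 := fun q hq =>
      inv5 n hn t i (by omega) _ (by omega) q hq (by omega)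
    have key : ∀ d q, q + d = n - 2 → i ≤ q → ent n (RR n t (i + 1)) (n - 1 - i) (n + q) =
        (-1) ^ (n - 1 - q) * (ent n (RR n t i) (n - 1 - i) (be n i) *
          ∏ m ∈ Finset.Ico (q + 1) n, tau n t i m) := by
      intro d
      induction d with
      | zero =>
        intro q hq hsq
        have : Finset.Ico (q + 1) n = {n - 1} := by ext; simp; omega
        rw [this, show n - 1 - q = 1 by omega, show q = n - 2 by omega, k6, hz _ le_rfl]
        simp; ring
      | succ d ih =>
        intro q hq hsq
        rw [k5 q (by omega) hsq, hz q (by omega), show n + q + 1 = n + (q + 1) by ring,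
          ih (q + 1) (by omega) (by omega), show n - 1 - q = (n - 1 - (q + 1)) + 1 by omega, pow_succ,
          Finset.prod_eq_prod_Ico_succ_bot (show q + 1 < n by omega)]
        ring
    exact key (n - 2 - i) i (by omega) le_rfl
  | succ s hs' ih =>
    obtain ⟨-, -, -, k4, k5, k6⟩ := run_spec n s hn (by omega) t (RR n t s) (n - 1 - i)
    rw [← RR_succ] at k4
    rw [k4 i (by omega), ih (by omega)]

lemma inv7 (n : ℕ) (hn : 2 ≤ n) (t : ℕ → ℝ) (a j : ℕ) (haj : a + j ≤ n - 1) (s : ℕ) (hs : s ≤ n - 1)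
    (has : a ≤ s) :
    DD j (fun p q => ent n (RR n t s) p (a + q)) =
      ∏ p ∈ Finset.range j, ∏ x ∈ Finset.range a, tau n t x (p + x + 1) := by
  induction s, has using Nat.le_induction with
  | base =>
    rw [DD_lower]
    · apply Finset.prod_congr rfl
      intro p hp
      have := Finset.mem_range.1 hp
      rw [add_comm a p]
      exact (inv1 n hn t a hs p (by omega)).2.2 (by omega)
    · intro p q hpq hq
      exact (inv1 n hn t a hs p (by omega)).1 _ (by omega) (by omega)
  | succ s has ih =>
    rw [← ih (by omega), ← DD_addcol j (fun p q => ent n (RR n t s) p (a + q))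
      (fun q => if s < a + q then tau n t s (a + q) else 0)]
    apply DD_congr
    intro p hp q hq
    rw [RR_succ, (run_spec n s hn (by omega) t (RR n t s) p).1 (a + q) (by omega)]
    congr 1
    by_cases hq0 : q = 0
    · rw [if_pos hq0, if_neg (by omega)]
    · rw [if_neg hq0, show a + q - 1 = a + (q - 1) by omega]
      split_ifs <;> ring

def PP (n : ℕ) (t : ℕ → ℝ) (w : List ℕ) (o : ℕ) : Matrix (Fin (2 * n)) (Fin (2 * n)) ℝ :=
  ((List.range w.length).map (fun l => xMat n (w.getD l 0) (t (o + l)))).prod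

lemma PP_append (n : ℕ) (t : ℕ → ℝ) (w v : List ℕ) (o : ℕ) :
    PP n t (w ++ v) o = PP n t w o * PP n t v (o + w.length) := by
  unfold PP
  rw [List.length_append, List.range_add, List.map_append, List.prod_append, List.map_map]
  congr 2
  · apply List.map_congr_left
    intro l hl
    have := List.mem_range.1 hl
    rw [List.getD_append _ _ _ _ this]
  · apply List.map_congr_left
    intro l hl
    simp only [Function.comp]
    rw [List.getD_append_right _ _ _ _ (by omega), Nat.add_sub_cancel_left, add_assoc]

def rl (n s : ℕ) : List ℕ := (List.range (n - 1 - s)).map (wl n s)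

lemma PP_rl (n : ℕ) (t : ℕ → ℝ) (s : ℕ) : PP n t (rl n s) (offs n s) = prun n s t (n - 1 - s) := by
  unfold PP prun
  have : (rl n s).length = n - 1 - s := by simp [rl]
  rw [this]
  congr 1
  apply List.map_congr_left
  intro l hl
  have := List.mem_range.1 hl
  simp [rl, this]

lemma rl_even (n m : ℕ) (h : m < n / 2) : rl n (2 * m) = n :: decRun (n - 2) (2 * m + 1) := by
  apply List.ext_getElem
  · simp [rl, decRun]; omega
  · intro i h1 h2
    rcases i with _ | i
    · simp [rl, wl]
    · simp [rl, decRun] at h1 h2 ⊢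
      simp [wl]; omega

lemma rl_odd (n m : ℕ) (h : m < n / 2) : rl n (2 * m + 1) = decRun (n - 1) (2 * m + 2) := by
  apply List.ext_getElem
  · simp [rl, decRun]
  · intro i h1 h2
    simp [rl, decRun] at h1 h2 ⊢
    have : (2 * m + 1) % 2 ≠ 0 := by omega
    simp [wl]; omega

lemma word_blocks (n : ℕ) (t : ℕ → ℝ) (M : ℕ) (hM : M ≤ n / 2) :
    (((List.range M).map (fun m =>
      n :: (decRun (n - 2) (2 * m + 1) ++ decRun (n - 1) (2 * m + 2)))).flatten).length = offs n (2 * M)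
    ∧ PP n t (((List.range M).map (fun m =>
      n :: (decRun (n - 2) (2 * m + 1) ++ decRun (n - 1) (2 * m + 2)))).flatten) 0 = RR n t (2 * M) := by
  induction M with
  | zero => simp [offs, PP, RR]
  | succ M ih =>
    obtain ⟨h1, h2⟩ := ih (by omega)
    rw [List.range_succ, List.map_append, List.flatten_append]
    simp only [List.map_cons, List.map_nil, List.flatten_cons, List.flatten_nil, List.append_nil]
    rw [← List.cons_append, ← rl_even n M (by omega), ← rl_odd n M (by omega)]
    have l1 : ∀ s, (rl n s).length = n - 1 - s := fun s => by simp [rl]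
    constructor
    · rw [List.length_append, List.length_append, h1, l1, l1]
      rw [show 2 * (M + 1) = 2 * M + 1 + 1 by ring]
      simp only [offs, Finset.sum_range_succ]
      ring
    · rw [PP_append, h2, h1, zero_add, PP_append, PP_rl, l1]
      have : offs n (2 * M) + (n - 1 - 2 * M) = offs n (2 * M + 1) := by
        simp only [offs, Finset.sum_range_succ]
      rw [this, PP_rl, ← mul_assoc, ← RR_succ, ← RR_succ]
      rfl

lemma offs_Npar (n : ℕ) : offs n (n - 1) = Npar n := by
  unfold offs Npar
  rw [← Finset.sum_range_id]
  rcases n with _ | n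
  · simp
  · simp only [Nat.add_sub_cancel]
    rw [Finset.sum_range_succ', add_zero, ← Finset.sum_range_reflect (fun i => i + 1) n]
    apply Finset.sum_congr rfl
    intro x hx
    have := Finset.mem_range.1 hx
    omega

lemma prodX_eq (n : ℕ) (hn : 2 ≤ n) (t : ℕ → ℝ) : prodX n t = RR n t (n - 1) := by
  obtain ⟨h1, h2⟩ := word_blocks n t (n / 2) le_rfl
  have h3 : offs n (2 * (n / 2)) = Npar n ∧ RR n t (2 * (n / 2)) = RR n t (n - 1) := by
    rw [← offs_Npar]
    rcases Nat.mod_two_eq_zero_or_one n with h | h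
    · have : 2 * (n / 2) = n - 1 + 1 := by omega
      rw [this, RR_succ]
      simp [offs, Finset.sum_range_succ, prun]
    · have : 2 * (n / 2) = n - 1 := by omega
      rw [this]; simp
  rw [← h3.2, ← h2]
  unfold prodX PP
  rw [h1, h3.1]
  simp only [zero_add, wordD]

lemma X1_eq (n : ℕ) (hn : 2 ≤ n) (t : ℕ → ℝ) (p q : Fin n) :
    X1 n t p q = ent n (RR n t (n - 1)) p q := by
  have := p.2
  have := q.2
  rw [ent, dif_pos ⟨by omega, by omega⟩, ← prodX_eq n hn]
  rfl

lemma X2_eq (n : ℕ) (hn : 2 ≤ n) (t : ℕ → ℝ) (p q : Fin n) :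
    X2 n t p q = ent n (RR n t (n - 1)) p (n + q) := by
  have := p.2
  have := q.2
  rw [ent, dif_pos ⟨by omega, by omega⟩, ← prodX_eq n hn]
  rfl

lemma X1_det (n : ℕ) (hn : 2 ≤ n) (t : ℕ → ℝ) : (X1 n t).det = 1 := by
  have : X1 n t = Matrix.of fun p q : Fin n => ent n (RR n t (n - 1)) p q := by
    ext p q
    exact X1_eq n hn t p q
  rw [this]
  change DD n _ = 1
  rw [DD_upper]
  · apply Finset.prod_eq_one
    intro i hi
    have := Finset.mem_range.1 hi
    by_cases h : i = n - 1
    · rw [h]; exact inv3 n hn t _ le_rfl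
    · exact (inv1 n hn t _ le_rfl i (by omega)).2.1 (by omega)
  · intro p q h1 h2
    exact (inv1 n hn t _ le_rfl p h2).1 q (by omega) (Or.inl h1)

def Ee (n : ℕ) (t : ℕ → ℝ) (i : ℕ) : ℝ :=
  (∏ x ∈ Finset.range i, tau n t x (n - 1 - i + x + 1)) * ∏ m ∈ Finset.Ico (i + 1) n, tau n t i m

def Hh (n : ℕ) (t : ℕ → ℝ) (a j : ℕ) : ℝ :=
  ∏ x ∈ Finset.range a, ∏ p ∈ Finset.range j, tau n t x (x + 1 + p)

lemma M_formula (n : ℕ) (hn : 2 ≤ n) (t : ℕ → ℝ) (a b j : ℕ) (hj : 1 ≤ j) (hb : 1 ≤ b)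
    (hab : a + b + j = n) :
    Mminor n j (b + j - 1) (Amat n t) =
      (∏ i ∈ Finset.range (a + b), Ee n t i) * Hh n t a j := by
  set A := Amat n t with hA
  let An : ℕ → ℕ → ℝ := fun p q => if h : p < n ∧ q < n then A ⟨p, h.1⟩ ⟨q, h.2⟩ else 0
  let Bf : ℕ → ℕ → ℝ := fun p q => if q < a + b then An p q else
      if p = a + (q - (a + b)) then 1 else 0
  let G : ℕ → ℕ → ℝ := fun p q => if q < a + b then ent n (RR n t (n - 1)) p (n + q) else
      ent n (RR n t (n - 1)) p (a + (q - (a + b)))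
  have hX : IsUnit (X1 n t).det := by rw [X1_det n hn]; exact isUnit_one
  have e1 : Mminor n j (b + j - 1) A = DD n Bf := by
    have := lemE a b j An
    rw [hab] at this
    change _ = DD n (fun p q => if q < a + b then An p q else
      if p = a + (q - (a + b)) then 1 else 0)
    rw [this]
    unfold Mminor
    congr 1
    · have h2 : j * (b + j - 1) + b * j = 2 * (b * j) + j * (j - 1) := by
        obtain ⟨j, rfl⟩ := Nat.exists_eq_add_of_le hj
        rw [show b + (1 + j) - 1 = b + j by omega, show 1 + j - 1 = j by omega]
        ring
      have h3 : Even (j * (b + j - 1) + b * j) := by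
        rw [h2]
        exact (even_two_mul _).add (Nat.even_mul_pred_self j)
      rcases Nat.even_add.1 h3 with h4
      rcases Nat.even_or_odd (b * j) with h5 | h5
      · rw [h5.neg_one_pow, (h4.2 h5).neg_one_pow]
      · have h6 : Odd (j * (b + j - 1)) := by
          rw [← Nat.not_even_iff_odd] at h5 ⊢
          tauto
        rw [h5.neg_one_pow, h6.neg_one_pow]
    · have gen : ∀ m, m = a + b → ∀ hm : m ≤ n - j, Matrix.det (Matrix.of fun (p q : Fin m) =>
        A (if (p : ℕ) < n - (b + j - 1) - 1
          then ⟨(p : ℕ), by have := p.isLt; omega⟩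
          else ⟨(p : ℕ) + j, by have := p.isLt; omega⟩)
        ⟨(q : ℕ), by have := q.isLt; omega⟩) = DD (a + b) (fun p q => An (if p < a then p else p + j) q) := by
        intro m hm _
        subst hm
        unfold DD
        congr 1
        ext p q
        have := p.2
        have := q.2
        simp only [Matrix.of_apply, An]
        rw [dif_pos (by constructor <;> [split_ifs; skip] <;> omega)]
        congr 1
        have : n - (b + j - 1) - 1 = a := by omega
        simp only [this]
        split_ifs <;> rfl
      exact gen (n - j) (by omega) le_rfl
  have e2 : DD n Bf = DD n G := by
    unfold DD
    rw [← one_mul (Matrix.det _), ← X1_det n hn t, ← Matrix.det_mul]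
    congr 1
    ext p q
    by_cases hq : (q : ℕ) < a + b
    · have : (X1 n t * Amat n t) p q = X2 n t p q := by
        rw [Amat, Matrix.mul_nonsing_inv_cancel_left _ _ hX]
      simp only [Matrix.of_apply, G, hq, if_true]
      rw [← X2_eq n hn, ← this, Matrix.mul_apply, Matrix.mul_apply]
      apply Finset.sum_congr rfl
      intro r _
      simp [Bf, hq, An, hA]
    · simp only [Matrix.of_apply, G, hq, if_false]
      have hq2 := q.2
      rw [Matrix.mul_apply, Finset.sum_eq_single (⟨a + (q - (a + b)), by omega⟩ : Fin n)]
      · rw [X1_eq n hn]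
        simp [Bf, hq]
      · intro r _ hr
        have : ¬ ((r : ℕ) = a + (q - (a + b))) := fun e => hr (Fin.ext e)
        simp [Bf, hq, this]
      · simp
  have e3 := lemF (a + b) j G (by
    intro p q h1 h2
    simp only [G, h1, if_true]
    exact inv5 n hn t _ le_rfl p (by omega) q (by omega) (Or.inr (by omega)))
  rw [hab] at e3
  rw [e1, e2, e3]
  congr 1
  · apply Finset.prod_congr rfl
    intro i hi
    have := Finset.mem_range.1 hi
    simp only [G, this, if_true]
    rw [inv6 n hn t i _ le_rfl (by omega), ← mul_assoc, ← pow_add, ← two_mul, pow_mul]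
    simp [Ee]
  · have : DD j (fun p q => G p (q + (a + b))) = DD j (fun p q => ent n (RR n t (n - 1)) p (a + q)) := by
      apply DD_congr
      intro p _ q _
      simp only [G]
      rw [if_neg (by omega), show q + (a + b) - (a + b) = q by omega]
    rw [this, inv7 n hn t a j (by omega) _ le_rfl (by omega), Finset.prod_comm, Hh]
    apply Finset.prod_congr rfl
    intro x _
    apply Finset.prod_congr rfl
    intro p _
    congr 1
    omega

lemma exists_idx (n : ℕ) (S i : ℕ) (hi : i < offs n S) :
    ∃ s q, s < S ∧ s < q ∧ q ≤ n - 1 ∧ i = offs n s + (n - 1 - q) := by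
  induction S with
  | zero => simp [offs] at hi
  | succ S ih =>
    by_cases h : i < offs n S
    · obtain ⟨s, q, h1, h2⟩ := ih h
      exact ⟨s, q, by omega, h2⟩
    · have : offs n (S + 1) = offs n S + (n - 1 - S) := by simp [offs, Finset.sum_range_succ]
      refine ⟨S, n - 1 - (i - offs n S), by omega, by omega, by omega, by omega⟩

lemma offs_mono (n : ℕ) {a b : ℕ} (h : a ≤ b) : offs n a ≤ offs n b := by
  unfold offs
  exact Finset.sum_le_sum_of_subset (Finset.range_mono h)

lemma tau_pos (n : ℕ) (t : ℕ → ℝ) (ht : ∀ l < Npar n, 0 < t l) (s q : ℕ) (hsq : s < q) (hq : q < n) :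
    0 < tau n t s q := by
  apply ht
  have h1 : offs n (s + 1) = offs n s + (n - 1 - s) := by simp [offs, Finset.sum_range_succ]
  have h2 := offs_mono n (show s + 1 ≤ n - 1 by omega)
  rw [offs_Npar] at h2
  omega

def Lau (n : ℕ) (f : (ℕ → ℝ) → ℝ) : Prop :=
  ∃ c : ℕ → ℕ → ℤ, ∀ t : ℕ → ℝ, (∀ l < Npar n, 0 < t l) →
    f t = ∏ j ∈ Finset.Icc 1 (n - 1), ∏ k ∈ Finset.Icc j (n - 1), Mminor n j k (Amat n t) ^ c j k

lemma Ee_pos (n : ℕ) (t : ℕ → ℝ) (ht : ∀ l < Npar n, 0 < t l) (i : ℕ) (hi : i < n) :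
    0 < Ee n t i := by
  apply mul_pos
  · apply Finset.prod_pos
    intro x hx
    have := Finset.mem_range.1 hx
    exact tau_pos n t ht _ _ (by omega) (by omega)
  · apply Finset.prod_pos
    intro x hx
    have := Finset.mem_Ico.1 hx
    exact tau_pos n t ht _ _ (by omega) (by omega)

lemma Hh_pos (n : ℕ) (t : ℕ → ℝ) (ht : ∀ l < Npar n, 0 < t l) (a j : ℕ) (h : a + j < n) :
    0 < Hh n t a j := by
  apply Finset.prod_pos
  intro x hx
  apply Finset.prod_pos
  intro p hp
  have := Finset.mem_range.1 hx
  have := Finset.mem_range.1 hp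
  exact tau_pos n t ht _ _ (by omega) (by omega)

lemma M_pos (n : ℕ) (hn : 2 ≤ n) (t : ℕ → ℝ) (ht : ∀ l < Npar n, 0 < t l) (j k : ℕ) (hj : 1 ≤ j)
    (hjk : j ≤ k) (hk : k ≤ n - 1) : 0 < Mminor n j k (Amat n t) := by
  have := M_formula n hn t (n - 1 - k) (k + 1 - j) j hj (by omega) (by omega)
  rw [show k + 1 - j + j - 1 = k by omega] at this
  rw [this]
  apply mul_pos
  · apply Finset.prod_pos
    intro i hi
    have := Finset.mem_range.1 hi
    exact Ee_pos n t ht i (by omega)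
  · exact Hh_pos n t ht _ _ (by omega)

lemma Lau_congr (n : ℕ) {f g : (ℕ → ℝ) → ℝ} (hf : Lau n f)
    (h : ∀ t : ℕ → ℝ, (∀ l < Npar n, 0 < t l) → g t = f t) : Lau n g := by
  obtain ⟨c, hc⟩ := hf
  exact ⟨c, fun t ht => (h t ht).trans (hc t ht)⟩

lemma Lau_one (n : ℕ) : Lau n (fun _ => 1) := ⟨fun _ _ => 0, fun t _ => by simp⟩

lemma Lau_mul (n : ℕ) (hn : 2 ≤ n) {f g : (ℕ → ℝ) → ℝ} (hf : Lau n f) (hg : Lau n g) :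
    Lau n (fun t => f t * g t) := by
  obtain ⟨c, hc⟩ := hf
  obtain ⟨d, hd⟩ := hg
  refine ⟨fun j k => c j k + d j k, fun t ht => ?_⟩
  simp only
  rw [hc t ht, hd t ht, ← Finset.prod_mul_distrib]
  apply Finset.prod_congr rfl
  intro j hj
  rw [← Finset.prod_mul_distrib]
  apply Finset.prod_congr rfl
  intro k hk
  rw [Finset.mem_Icc] at hj hk
  rw [zpow_add₀ (M_pos n hn t ht j k hj.1 hk.1 hk.2).ne']

lemma Lau_inv (n : ℕ) {f : (ℕ → ℝ) → ℝ} (hf : Lau n f) : Lau n (fun t => (f t)⁻¹) := by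
  obtain ⟨c, hc⟩ := hf
  refine ⟨fun j k => - c j k, fun t ht => ?_⟩
  simp only
  rw [hc t ht]
  simp [Finset.prod_inv_distrib, _root_.zpow_neg]

lemma Lau_div (n : ℕ) (hn : 2 ≤ n) {f g : (ℕ → ℝ) → ℝ} (hf : Lau n f) (hg : Lau n g) :
    Lau n (fun t => f t / g t) := by
  simp only [div_eq_mul_inv]
  exact Lau_mul n hn hf (Lau_inv n hg)

lemma Lau_prod (n : ℕ) (hn : 2 ≤ n) (S : Finset ℕ) (f : ℕ → (ℕ → ℝ) → ℝ) (hf : ∀ i ∈ S, Lau n (f i)) :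
    Lau n (fun t => ∏ i ∈ S, f i t) := by
  induction S using Finset.induction_on with
  | empty => simpa using Lau_one n
  | insert a S ha ih =>
    simp only [Finset.prod_insert ha]
    exact Lau_mul n hn (hf a (by simp)) (ih fun i hi => hf i (by simp [hi]))

lemma Lau_M (n j k : ℕ) (hj : 1 ≤ j) (hjk : j ≤ k) (hk : k ≤ n - 1) :
    Lau n (fun t => Mminor n j k (Amat n t)) := by
  refine ⟨fun j' k' => if j' = j ∧ k' = k then 1 else 0, fun t ht => ?_⟩
  simp only
  rw [Finset.prod_eq_single j, Finset.prod_eq_single k]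
  · simp
  · intro b _ hb
    simp [hb]
  · intro h
    exact absurd (Finset.mem_Icc.2 ⟨hjk, hk⟩) h
  · intro b _ hb
    apply Finset.prod_eq_one
    intro k' _
    simp [hb]
  · intro h
    exact absurd (Finset.mem_Icc.2 ⟨hj, by omega⟩) h

lemma Lau_Eprod (n : ℕ) (hn : 2 ≤ n) (c : ℕ) (hc : c ≤ n - 1) :
    Lau n (fun t => ∏ i ∈ Finset.range c, Ee n t i) := by
  rcases Nat.eq_zero_or_pos c with rfl | h
  · simpa using Lau_one n
  · refine Lau_congr n (Lau_M n (n - c) (c + (n - c) - 1) (by omega) (by omega) (by omega)) ?_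
    intro t _
    rw [M_formula n hn t 0 c (n - c) (by omega) h (by omega)]
    simp [Hh]

lemma Lau_Ee (n : ℕ) (hn : 2 ≤ n) (i : ℕ) (hi : i < n - 1) : Lau n (fun t => Ee n t i) := by
  refine Lau_congr n (Lau_div n hn (Lau_Eprod n hn (i + 1) (by omega)) (Lau_Eprod n hn i (by omega))) ?_
  intro t ht
  rw [Finset.prod_range_succ, mul_div_cancel_left₀]
  exact (Finset.prod_pos fun x hx => Ee_pos n t ht x (by have := Finset.mem_range.1 hx; omega)).ne'

lemma Lau_Hh (n : ℕ) (hn : 2 ≤ n) (a j : ℕ) (h : a + j ≤ n - 1) : Lau n (fun t => Hh n t a j) := by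
  rcases Nat.eq_zero_or_pos j with rfl | hj
  · simpa [Hh] using Lau_one n
  · refine Lau_congr n (Lau_div n hn (Lau_M n j (n - a - j + j - 1) hj (by omega) (by omega))
      (Lau_Eprod n hn (a + (n - a - j)) (by omega))) ?_
    intro t ht
    rw [M_formula n hn t a (n - a - j) j hj (by omega) (by omega), mul_div_cancel_left₀]
    exact (Finset.prod_pos fun x hx => Ee_pos n t ht x (by have := Finset.mem_range.1 hx; omega)).ne'

lemma Lau_row (n : ℕ) (hn : 2 ≤ n) (a j : ℕ) (h : a + j ≤ n - 2) :
    Lau n (fun t => ∏ p ∈ Finset.range j, tau n t a (a + 1 + p)) := by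
  refine Lau_congr n (Lau_div n hn (Lau_Hh n hn (a + 1) j (by omega)) (Lau_Hh n hn a j (by omega))) ?_
  intro t ht
  have := Hh_pos n t ht a j (by omega)
  rw [eq_div_iff this.ne']
  simp only [Hh]
  rw [Finset.prod_range_succ, mul_comm]

lemma Lau_tau1 (n : ℕ) (hn : 2 ≤ n) (s q : ℕ) (hsq : s < q) (hq : q ≤ n - 2) :
    Lau n (fun t => tau n t s q) := by
  refine Lau_congr n (Lau_div n hn (Lau_row n hn s (q - s - 1 + 1) (by omega))
    (Lau_row n hn s (q - s - 1) (by omega))) ?_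
  intro t ht
  rw [Finset.prod_range_succ, mul_div_cancel_left₀]
  · congr 1; omega
  · apply (Finset.prod_pos _).ne'
    intro x hx
    have := Finset.mem_range.1 hx
    exact tau_pos n t ht _ _ (by omega) (by omega)

lemma Lau_tau (n : ℕ) (hn : 2 ≤ n) (s : ℕ) : ∀ q, s < q → q ≤ n - 1 → Lau n (fun t => tau n t s q) := by
  induction s using Nat.strong_induction_on with
  | _ s ih =>
    intro q hsq hq
    by_cases hq' : q ≤ n - 2
    · exact Lau_tau1 n hn s q hsq hq'
    · have hqe : q = n - 1 := by omega
      have L1 : Lau n (fun t => ∏ x ∈ Finset.range s, tau n t x (n - 1 - s + x + 1)) :=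
        Lau_prod n hn _ (fun x t => tau n t x (n - 1 - s + x + 1)) (fun x hx => by
          have := Finset.mem_range.1 hx
          exact ih x this _ (by omega) (by omega))
      have L2 : Lau n (fun t => ∏ m ∈ Finset.Ico (s + 1) (n - 1), tau n t s m) :=
        Lau_prod n hn _ (fun m t => tau n t s m) (fun x hx => by
          have := Finset.mem_Ico.1 hx
          exact Lau_tau1 n hn s x (by omega) (by omega))
      refine Lau_congr n (Lau_div n hn (Lau_Ee n hn s (by omega)) (Lau_mul n hn L1 L2)) ?_
      intro t ht
      have p1 : 0 < ∏ x ∈ Finset.range s, tau n t x (n - 1 - s + x + 1) := by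
        apply Finset.prod_pos
        intro x hx
        have := Finset.mem_range.1 hx
        exact tau_pos n t ht _ _ (by omega) (by omega)
      have p2 : 0 < ∏ m ∈ Finset.Ico (s + 1) (n - 1), tau n t s m := by
        apply Finset.prod_pos
        intro x hx
        have := Finset.mem_Ico.1 hx
        exact tau_pos n t ht _ _ (by omega) (by omega)
      rw [eq_div_iff (mul_pos p1 p2).ne', Ee, hqe]
      have : ∏ m ∈ Finset.Ico (s + 1) n, tau n t s m =
          (∏ m ∈ Finset.Ico (s + 1) (n - 1), tau n t s m) * tau n t s (n - 1) := by
        rw [← Finset.prod_Ico_succ_top (by omega), show n - 1 + 1 = n by omega]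
      rw [this]
      ring

/-- The parameters `t_i` are Laurent monomials in the minors
`M_{j,k}(A(t))`: there are integers `c j k i` with
`t_i = Π_{1 ≤ j ≤ k ≤ n-1} M_{j,k}(A(t))^{c j k i}` for positive parameters. -/
theorem params_are_laurent_monomials (n : ℕ) (hn : 2 ≤ n) :
    ∃ c : ℕ → ℕ → ℕ → ℤ,
      ∀ t : ℕ → ℝ, (∀ l < Npar n, 0 < t l) →
        ∀ i < Npar n,
          t i = ∏ j ∈ Finset.Icc 1 (n - 1), ∏ k ∈ Finset.Icc j (n - 1),
            Mminor n j k (Amat n t) ^ c j k i := by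
  have key : ∀ i, ∃ c : ℕ → ℕ → ℤ, i < Npar n → ∀ t : ℕ → ℝ, (∀ l < Npar n, 0 < t l) →
      t i = ∏ j ∈ Finset.Icc 1 (n - 1), ∏ k ∈ Finset.Icc j (n - 1),
        Mminor n j k (Amat n t) ^ c j k := by
    intro i
    by_cases hi : i < Npar n
    · rw [← offs_Npar] at hi
      obtain ⟨s, q, h1, h2, h3, h4⟩ := exists_idx n _ i hi
      obtain ⟨c, hc⟩ := Lau_tau n hn s q h2 h3
      refine ⟨c, fun _ t ht => ?_⟩
      rw [h4]
      exact hc t ht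
    · exact ⟨fun _ _ => 0, fun h => absurd h hi⟩
  choose c hc using key
  exact ⟨fun j k i => c i j k, fun t ht i hi => hc i hi t ht⟩
end
end

section
/- Let A and B be n×n real skew-symmetric matrices such that M_{j,k}(A) = M_{j,k}(B) and M_{j,k}(A) ≠ 0 for all integers 1 ≤ j ≤ k ≤ n−1. Then A = B. In other words, the minors M_{j,k} fully determine a skew-symmetric matrix on which they are all nonzero. -/
noncomputable section

open Matrix

/-- Prepend a column. -/
def ccX (z : ℕ → ℝ) (C : ℕ → ℕ → ℝ) : ℕ → ℕ → ℝ := fun i j =>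
  match j with
  | 0 => z i
  | j + 1 => C i j

/-- Left-justified minor with rows `r 0, r 1, …`. -/
def DeX (m : ℕ) (r : ℕ → ℕ) (M : ℕ → ℕ → ℝ) : ℝ :=
  Matrix.det (Matrix.of fun i j : Fin m => M (r i) j)

lemma DeX_congr {m : ℕ} {r r' : ℕ → ℕ} {M M' : ℕ → ℕ → ℝ}
    (h : ∀ i < m, ∀ j < m, M (r i) j = M' (r' i) j) : DeX m r M = DeX m r' M' := by
  unfold DeX
  congr 1
  ext i j
  exact h i i.2 j j.2

lemma DeX_expand (k : ℕ) (r : ℕ → ℕ) (z : ℕ → ℝ) (C : ℕ → ℕ → ℝ) :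
    DeX (k+1) r (ccX z C) = ∑ i : Fin (k+1), (-1)^(i:ℕ) * z (r i) *
      Matrix.det (Matrix.of fun a b : Fin k => C (r (i.succAbove a)) b) := by
  unfold DeX
  rw [Matrix.det_succ_column_zero]
  rfl

lemma DeX_lin (k : ℕ) (r : ℕ → ℕ) (z w : ℕ → ℝ) (c : ℝ) (C : ℕ → ℕ → ℝ) :
    DeX (k+1) r (ccX (fun i => z i - c * w i) C)
      = DeX (k+1) r (ccX z C) - c * DeX (k+1) r (ccX w C) := by
  simp only [DeX_expand, Finset.mul_sum, ← Finset.sum_sub_distrib]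
  refine Finset.sum_congr rfl fun i _ => ?_
  ring

lemma DeX_col (k : ℕ) (r : ℕ → ℕ) (z : ℕ → ℝ) (C : ℕ → ℕ → ℝ)
    (h : ∀ i < k, z (r (i+1)) = 0) :
    DeX (k+1) r (ccX z C) = z (r 0) * DeX k (fun i => r (i+1)) C := by
  rw [DeX_expand, Fin.sum_univ_succ, Finset.sum_eq_zero]
  · simp [DeX]
  · intro i _
    have := h i i.2
    simp [this]

lemma DeX_row (k : ℕ) (r : ℕ → ℕ) (z : ℕ → ℝ) (C : ℕ → ℕ → ℝ)
    (h : ∀ j < k, C (r 0) j = 0) :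
    DeX (k+1) r (ccX z C) = z (r 0) * DeX k (fun i => r (i+1)) C := by
  unfold DeX
  rw [Matrix.det_succ_row_zero, Fin.sum_univ_succ, Finset.sum_eq_zero]
  · simp [ccX, Matrix.submatrix]
  · intro i _
    have := h i i.2
    simp [ccX, this]

lemma DeX_swap (k : ℕ) (r : ℕ → ℕ) (x y : ℕ → ℝ) (C : ℕ → ℕ → ℝ) :
    DeX (k+2) r (ccX x (ccX y C)) = - DeX (k+2) r (ccX y (ccX x C)) := by
  unfold DeX
  have h := Matrix.det_permute' (Equiv.swap (0 : Fin (k+2)) 1)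
    (Matrix.of fun i j : Fin (k+2) => ccX y (ccX x C) (r i) j)
  rw [Equiv.Perm.sign_swap (by simp)] at h
  simp only [Units.val_neg, Units.val_one, Int.cast_neg, Int.cast_one, neg_mul, one_mul] at h
  rw [← h]
  congr 1
  ext i j
  refine Fin.cases ?_ (fun j => ?_) j
  · simp [ccX]
  refine Fin.cases ?_ (fun j => ?_) j
  · simp [ccX]
  · rw [Matrix.submatrix_apply, Equiv.swap_apply_of_ne_of_ne (Fin.succ_ne_zero _)]
    · simp [ccX]
    · intro h
      have := congrArg Fin.val h
      simp at this

lemma DeX_same (k : ℕ) (r : ℕ → ℕ) (x : ℕ → ℝ) (C : ℕ → ℕ → ℝ) :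
    DeX (k+2) r (ccX x (ccX x C)) = 0 := by
  have := DeX_swap k r x x C
  linarith

lemma DeX_colop (m : ℕ) (r : ℕ → ℕ) (x y u v : ℕ → ℝ) (A H : ℕ → ℕ → ℝ)
    (h0 : ∀ i, A i 0 = x i) (h1 : ∀ i, A i 1 = y i)
    (h2 : ∀ i j, A i (j+2) = H i j + x i * u j + y i * v j) :
    DeX m r A = DeX m r (ccX x (ccX y H)) := by
  match m with
  | 0 => simp [DeX]
  | 1 => simp [DeX, ccX, h0]
  | k+2 =>
    have e1 : DeX (k+2) r (ccX x (ccX y (fun i j => H i j + x i * u j)))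
        = DeX (k+2) r (ccX x (ccX y H)) := by
      unfold DeX
      rw [← Matrix.det_transpose, ← Matrix.det_transpose (Matrix.of _)]
      refine Matrix.det_eq_of_forall_row_eq_smul_add_const
        (fun i : Fin (k+2) => ccX (fun _ => 0) (ccX (fun _ => 0) (fun _ j => u j)) 0 i) 0 rfl ?_
      intro i j
      refine Fin.cases ?_ (fun i => ?_) i
      · simp [ccX]
      refine Fin.cases ?_ (fun i => ?_) i
      · simp [ccX]
      · simp [ccX, mul_comm]
    rw [← e1]
    unfold DeX
    rw [← Matrix.det_transpose, ← Matrix.det_transpose (Matrix.of _)]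
    refine Matrix.det_eq_of_forall_row_eq_smul_add_const
      (fun i : Fin (k+2) => ccX (fun _ => 0) (ccX (fun _ => 0) (fun _ j => v j)) 0 i) 1 rfl ?_
    intro i j
    refine Fin.cases ?_ (fun i => ?_) i
    · simp [ccX, h0]
    refine Fin.cases ?_ (fun i => ?_) i
    · simp [ccX, h1]
    · simp [ccX, h2, mul_comm]

lemma L1X (K : ℕ) (z : ℕ → ℝ) (C : ℕ → ℕ → ℝ)
    (h : ∀ m e, m + 1 + e = K → DeX (m+1) (fun i => i + e) (ccX z C) = 0)
    (hD : ∀ m e, m + 1 + e = K → DeX m (fun i => i + (e+1)) C ≠ 0) :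
    ∀ i < K, z i = 0 := by
  have key : ∀ m e, m + e = K → ∀ i < m, z (i + e) = 0 := by
    intro m
    induction m with
    | zero => intro e _ i hi; omega
    | succ m ih =>
      intro e he i hi
      have ih' : ∀ i < m, z (i + 1 + e) = 0 := by
        intro i hi
        have := ih (e+1) (by omega) i hi
        rwa [show i + 1 + e = i + (e+1) by ring]
      rcases i with _ | i
      · have h1 := h m e (by omega)
        rw [DeX_col _ _ _ _ ih'] at h1
        rcases mul_eq_zero.1 h1 with h2 | h2
        · exact h2
        · exfalso
          refine hD m e (by omega) ?_
          rw [← h2]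
          exact DeX_congr (fun i _ j _ => by rw [show i + (e+1) = i + 1 + e by ring])
      · exact ih' i (by omega)
  intro i hi
  exact key K 0 (by omega) i hi

lemma L2X (K : ℕ) (hK : 1 ≤ K) (x z : ℕ → ℝ) (C : ℕ → ℕ → ℝ)
    (hT : ∀ k e, k + 2 + e = K → DeX (k+2) (fun i => i + e) (ccX x (ccX z C)) = 0)
    (hE : ∀ m e, m + 1 + e = K → DeX (m+1) (fun i => i + e) (ccX x C) ≠ 0)
    (hz : DeX (K - 1 + 1) (fun i => i + 0) (ccX z C) = 0) :
    ∀ i < K, z i = 0 := by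
  have hx : x (K-1) ≠ 0 := by
    have := hE 0 (K-1) (by omega)
    simpa [DeX, ccX] using this
  set c := z (K-1) / x (K-1) with hc
  have key : ∀ m e, m + 1 + e = K → ∀ i < m + 1, z (i + e) - c * x (i + e) = 0 := by
    intro m
    induction m with
    | zero =>
      intro e he i hi
      obtain rfl : i = 0 := by omega
      obtain rfl : e = K - 1 := by omega
      simp [hc, hx]
    | succ m ih =>
      intro e he i hi
      have ih' : ∀ i < m + 1, z (i + 1 + e) - c * x (i + 1 + e) = 0 := by
        intro i hi
        have := ih (e+1) (by omega) i hi
        rwa [show i + 1 + e = i + (e+1) by ring]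
      rcases i with _ | i
      · have h1 := hT m e (by omega)
        rw [DeX_swap, neg_eq_zero] at h1
        have h3 := DeX_lin (m+1) (fun i => i + e) z x c (ccX x C)
        rw [h1, DeX_same, DeX_col _ _ _ _ ih'] at h3
        simp only [mul_zero, sub_zero] at h3
        rcases mul_eq_zero.1 h3 with h2 | h2
        · exact h2
        · exfalso
          refine hE m (e+1) (by omega) ?_
          rw [← h2]
          exact DeX_congr (fun i _ j _ => by rw [show i + (e+1) = i + 1 + e by ring])
      · exact ih' i (by omega)
  have hw := key (K-1) 0 (by omega)
  have h4 : DeX (K-1+1) (fun i => i + 0) (ccX (fun i => z i - c * x i) C) = 0 := by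
    rw [DeX_col _ _ _ _ (fun i hi => hw (i+1) (by omega)), hw 0 (by omega), zero_mul]
  rw [DeX_lin, hz] at h4
  have h5 : c = 0 := by
    have := hE (K-1) 0 (by omega)
    have h6 : c * DeX (K-1+1) (fun i => i + 0) (ccX x C) = 0 := by linarith
    exact (mul_eq_zero.1 h6).resolve_right this
  intro i hi
  have := hw i (by omega)
  simpa [h5] using this

/-- Row selector. -/
def rwX (q d : ℕ) : ℕ → ℕ := fun i => if i < q then i else i + d

/-- Schur complement. -/
def scX (A : ℕ → ℕ → ℝ) : ℕ → ℕ → ℝ := fun i j =>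
  A i (j+2) - A i 0 * (A 1 (j+2) / A 1 0) - A i 1 * (A 0 (j+2) / A 0 1)

lemma scX_op (A : ℕ → ℕ → ℝ) (m : ℕ) (r : ℕ → ℕ) :
    DeX m r A = DeX m r (ccX (fun i => A i 0) (ccX (fun i => A i 1) (scX A))) := by
  refine DeX_colop m r _ _ (fun j => A 1 (j+2) / A 1 0) (fun j => A 0 (j+2) / A 0 1) A _
    (fun _ => rfl) (fun _ => rfl) ?_
  intro i j
  simp only [scX]
  ring

/-- The Schur complement, reindexed. -/
def CcX (A : ℕ → ℕ → ℝ) : ℕ → ℕ → ℝ := fun i j => scX A (i+2) j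

lemma diagX {A : ℕ → ℕ → ℝ} (hA : ∀ i j, A j i = - A i j) (i : ℕ) : A i i = 0 := by
  have := hA i i
  linarith

lemma scX_zero {A : ℕ → ℕ → ℝ} (hA : ∀ i j, A j i = - A i j) (ha : A 0 1 ≠ 0) (j : ℕ) :
    scX A 0 j = 0 := by
  have := diagX hA 0
  simp only [scX, this]
  field_simp
  ring

lemma scX_one {A : ℕ → ℕ → ℝ} (hA : ∀ i j, A j i = - A i j) (ha : A 0 1 ≠ 0) (j : ℕ) :
    scX A 1 j = 0 := by
  have h1 := diagX hA 1
  have h2 : A 1 0 ≠ 0 := by rw [hA 0 1]; simpa using ha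
  simp only [scX, h1]
  field_simp
  ring

lemma CcX_eq {A : ℕ → ℕ → ℝ} (hA : ∀ i j, A j i = - A i j) (ha : A 0 1 ≠ 0) (i j : ℕ) :
    CcX A i j = A (i+2) (j+2) - (A (i+2) 0 * A (j+2) 1 - A (i+2) 1 * A (j+2) 0) / A 0 1 := by
  simp only [CcX, scX]
  rw [hA 0 1, hA (j+2) 1, hA (j+2) 0]
  field_simp
  ring

lemma CcX_skew {A : ℕ → ℕ → ℝ} (hA : ∀ i j, A j i = - A i j) (ha : A 0 1 ≠ 0) (i j : ℕ) :
    CcX A j i = - CcX A i j := by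
  rw [CcX_eq hA ha, CcX_eq hA ha, hA (i+2) (j+2)]
  ring

lemma data1 {A : ℕ → ℕ → ℝ} (hA : ∀ i j, A j i = - A i j) (ha : A 0 1 ≠ 0) (m q d : ℕ) :
    DeX (m+2) (rwX (q+2) d) A = A 0 1 * A 0 1 * DeX m (rwX q d) (CcX A) := by
  rw [scX_op, DeX_swap, DeX_row, DeX_row]
  · have : DeX m (fun i => rwX (q+2) d (i+1+1)) (scX A) = DeX m (rwX q d) (CcX A) := by
      refine DeX_congr fun i _ j _ => ?_
      simp only [CcX]
      congr 1
      simp only [rwX]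
      split_ifs <;> omega
    rw [this]
    simp only [rwX]
    simp [hA 0 1]
    ring
  · intro j _
    simpa [rwX] using scX_one hA ha j
  · intro j _
    rcases j with _ | j
    · simpa [rwX, ccX] using diagX hA 0
    · simpa [rwX, ccX] using scX_zero hA ha j

lemma data2 {A : ℕ → ℕ → ℝ} (hA : ∀ i j, A j i = - A i j) (ha : A 0 1 ≠ 0) (m e : ℕ) :
    DeX (m+2) (rwX 1 (e+1)) A
      = -A 0 1 * DeX (m+1) (fun i => i + e) (ccX (fun i => A (i+2) 0) (CcX A)) := by
  rw [scX_op, DeX_swap, DeX_row]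
  · have : DeX (m+1) (fun i => rwX 1 (e+1) (i+1)) (ccX (fun i => A i 0) (scX A))
        = DeX (m+1) (fun i => i + e) (ccX (fun i => A (i+2) 0) (CcX A)) := by
      refine DeX_congr fun i _ j _ => ?_
      have : rwX 1 (e+1) (i+1) = i + e + 2 := by
        simp only [rwX]
        split_ifs <;> omega
      rcases j with _ | j <;> simp [ccX, CcX, this]
    rw [this]
    simp [rwX]
  · intro j _
    rcases j with _ | j
    · simpa [rwX, ccX] using diagX hA 0
    · simpa [rwX, ccX] using scX_zero hA ha j

lemma data3 (A : ℕ → ℕ → ℝ) (m e : ℕ) :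
    DeX m (rwX 0 (e+2)) A = DeX m (fun i => i + e)
      (ccX (fun i => A (i+2) 0) (ccX (fun i => A (i+2) 1) (CcX A))) := by
  rw [scX_op]
  refine DeX_congr fun i _ j _ => ?_
  have : rwX 0 (e+2) i = i + e + 2 := by
    simp only [rwX]
    split_ifs <;> omega
  rcases j with _ | _ | j <;> simp [ccX, CcX, this]

lemma data4 {A : ℕ → ℕ → ℝ} (hA : ∀ i j, A j i = - A i j) (ha : A 0 1 ≠ 0) (k : ℕ) :
    DeX (k+2) (rwX 0 1) A
      = -A 0 1 * DeX (k+1) (fun i => i + 0) (ccX (fun i => A (i+2) 1) (CcX A)) := by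
  rw [scX_op, DeX_row]
  · have : DeX (k+1) (fun i => rwX 0 1 (i+1)) (ccX (fun i => A i 1) (scX A))
        = DeX (k+1) (fun i => i + 0) (ccX (fun i => A (i+2) 1) (CcX A)) := by
      refine DeX_congr fun i _ j _ => ?_
      rcases j with _ | j <;> simp [ccX, CcX, rwX]
    rw [this]
    simp [rwX, hA 0 1]
  · intro j _
    rcases j with _ | j
    · simpa [rwX, ccX] using diagX hA 1
    · simpa [rwX, ccX] using scX_one hA ha j

lemma ccX_congr_De {K m e : ℕ} (hm : m + 1 + e ≤ K) {x x' : ℕ → ℝ} {C C' : ℕ → ℕ → ℝ}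
    (hx : ∀ i < K, x i = x' i) (hC : ∀ i < K, ∀ j < K, C i j = C' i j) :
    DeX (m+1) (fun i => i + e) (ccX x C) = DeX (m+1) (fun i => i + e) (ccX x' C') := by
  refine DeX_congr fun i hi j hj => ?_
  rcases j with _ | j
  · exact hx _ (by omega)
  · exact hC _ (by omega) _ (by omega)

theorem mainX (N : ℕ) : ∀ A B : ℕ → ℕ → ℝ, (∀ i j, A j i = - A i j) → (∀ i j, B j i = - B i j) →
    (∀ m q d, q < m → 1 ≤ d → m + d = N → DeX m (rwX q d) A = DeX m (rwX q d) B) →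
    (∀ m q d, q < m → 1 ≤ d → m + d = N → DeX m (rwX q d) A ≠ 0) →
    ∀ i < N, ∀ j < N, A i j = B i j := by
  induction N using Nat.strong_induction_on with
  | _ N ih =>
  intro A B hA hB heq hne
  match N, ih, heq, hne with
  | 0, _, _, _ => intro i hi; omega
  | 1, _, _, _ =>
    intro i hi j hj
    obtain rfl : i = 0 := by omega
    obtain rfl : j = 0 := by omega
    rw [diagX hA, diagX hB]
  | 2, _, heq, _ =>
    have h := heq 1 0 1 (by omega) (by omega) (by omega)
    simp [DeX, rwX] at h
    intro i hi j hj
    have h' : A 0 1 = B 0 1 := by rw [hA 1 0, hB 1 0, h]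
    interval_cases i <;> interval_cases j <;> simp [diagX hA, diagX hB, h, h']
  | L + 3, ih, heq, hne =>
    have hxL : A (L+2) 0 = B (L+2) 0 := by
      have h := heq 1 0 (L+2) (by omega) (by omega) (by omega)
      simpa [DeX, rwX] using h
    have hD2 : ∀ M : ℕ → ℕ → ℝ, (∀ i j, M j i = - M i j) →
        DeX 2 (rwX 1 (L+1)) M = - M 0 1 * M (L+2) 0 := by
      intro M hM
      have : 1 + (L + 1) = L + 2 := by ring
      simp [DeX, rwX, Matrix.det_fin_two, diagX hM, this]
    have hxa := heq 2 1 (L+1) (by omega) (by omega) (by omega)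
    have hxan := hne 2 1 (L+1) (by omega) (by omega) (by omega)
    rw [hD2 A hA] at hxan
    rw [hD2 A hA, hD2 B hB, ← hxL] at hxa
    have hxn : A (L+2) 0 ≠ 0 := right_ne_zero_of_mul hxan
    have haA : A 0 1 ≠ 0 := by simpa using left_ne_zero_of_mul hxan
    have hab : A 0 1 = B 0 1 := by simpa using mul_right_cancel₀ hxn hxa
    have haB : B 0 1 ≠ 0 := hab ▸ haA
    -- Schur complements agree
    have hC : ∀ i < L + 1, ∀ j < L + 1, CcX A i j = CcX B i j := by
      refine ih (L+1) (by omega) _ _ (CcX_skew hA haA) (CcX_skew hB haB) ?_ ?_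
      · intro m q d h1 h2 h3
        have h := heq (m+2) (q+2) d (by omega) h2 (by omega)
        rw [data1 hA haA, data1 hB haB, ← hab] at h
        exact mul_left_cancel₀ (mul_ne_zero haA haA) h
      · intro m q d h1 h2 h3
        have h := hne (m+2) (q+2) d (by omega) h2 (by omega)
        rw [data1 hA haA] at h
        exact right_ne_zero_of_mul h
    have hCne : ∀ m e, m + 1 + e = L + 1 → DeX m (fun i => i + (e+1)) (CcX A) ≠ 0 := by
      intro m e hme
      rcases m with _ | m
      · simp [DeX]
      · have h := hne (m+1+2) (0+2) (e+1) (by omega) (by omega) (by omega)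
        rw [data1 hA haA] at h
        have h2 := right_ne_zero_of_mul h
        intro h3
        apply h2
        rw [← h3]
        exact DeX_congr fun i _ j _ => by simp [rwX]
    have hEne : ∀ m e, m + 1 + e = L + 1 →
        DeX (m+1) (fun i => i + e) (ccX (fun i => A (i+2) 0) (CcX A)) ≠ 0 := by
      intro m e hme
      have h := hne (m+2) 1 (e+1) (by omega) (by omega) (by omega)
      rw [data2 hA haA] at h
      exact right_ne_zero_of_mul h
    have hx : ∀ i < L + 1, A (i+2) 0 = B (i+2) 0 := by
      have := L1X (L+1) (fun i => A (i+2) 0 - 1 * B (i+2) 0) (CcX A) ?_ hCne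
      · intro i hi
        have := this i hi
        linarith
      · intro m e hme
        rw [DeX_lin]
        have h := heq (m+2) 1 (e+1) (by omega) (by omega) (by omega)
        rw [data2 hA haA, data2 hB haB, ← hab] at h
        have h2 := mul_left_cancel₀ (neg_ne_zero.2 haA) h
        rw [h2, ccX_congr_De (K := L+1) (by omega) (fun i _ => rfl) hC]
        ring
    have hy : ∀ i < L + 1, A (i+2) 1 = B (i+2) 1 := by
      have := L2X (L+1) (by omega) (fun i => A (i+2) 0)
        (fun i => A (i+2) 1 - 1 * B (i+2) 1) (CcX A) ?_ hEne ?_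
      · intro i hi
        have := this i hi
        linarith
      · intro k e hke
        rw [DeX_swap, DeX_lin, ← neg_neg (DeX (k+1+1) _ _), ← DeX_swap]
        have h := heq (k+2) 0 (e+2) (by omega) (by omega) (by omega)
        rw [data3, data3] at h
        rw [h, DeX_swap k _ _ _ (CcX B)]
        have : DeX (k+2) (fun i => i + e)
            (ccX (fun i => B (i+2) 1) (ccX (fun i => B (i+2) 0) (CcX B)))
          = DeX (k+2) (fun i => i + e)
            (ccX (fun i => B (i+2) 1) (ccX (fun i => A (i+2) 0) (CcX A))) := by
          refine DeX_congr fun i hi j hj => ?_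
          rcases j with _ | _ | j
          · rfl
          · exact (hx _ (by omega)).symm
          · exact (hC _ (by omega) _ (by omega)).symm
        rw [this]
        ring
      · rw [DeX_lin]
        have h := heq (L+2) 0 1 (by omega) (by omega) (by omega)
        rw [data4 hA haA, data4 hB haB, ← hab] at h
        have h2 := mul_left_cancel₀ (neg_ne_zero.2 haA) h
        rw [Nat.add_sub_cancel, h2,
          ccX_congr_De (K := L+1) (by omega) (fun i _ => rfl) hC]
        ring
    intro i hi j hj
    rcases i with _ | _ | i
    · rcases j with _ | _ | j
      · simp [diagX hA, diagX hB]
      · exact hab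
      · rw [hA (j+1+1) 0, hB (j+1+1) 0, hx j (by omega)]
    · rcases j with _ | _ | j
      · rw [hA 0, hB 0]; simp [hab]
      · simp [diagX hA, diagX hB]
      · rw [hA (j+1+1), hB (j+1+1)]
        have := hy j (by omega)
        simp [this]
    · rcases j with _ | _ | j
      · exact hx i (by omega)
      · exact hy i (by omega)
      · have h := hC i (by omega) j (by omega)
        rw [CcX_eq hA haA, CcX_eq hB haB, hx i (by omega), hx j (by omega), hy i (by omega),
          hy j (by omega), hab] at h
        simpa using h

/-- Extension by zero. -/
def extX {n : ℕ} (A : Matrix (Fin n) (Fin n) ℝ) : ℕ → ℕ → ℝ := fun i j =>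
  if h : i < n ∧ j < n then A ⟨i, h.1⟩ ⟨j, h.2⟩ else 0

lemma extX_skew {n : ℕ} {A : Matrix (Fin n) (Fin n) ℝ} (hA : Aᵀ = -A) (i j : ℕ) :
    extX A j i = - extX A i j := by
  unfold extX
  by_cases h : i < n ∧ j < n
  · rw [dif_pos h, dif_pos h.symm]
    exact congrFun (congrFun hA ⟨i, h.1⟩) ⟨j, h.2⟩
  · rw [dif_neg h, dif_neg (fun h' => h h'.symm), neg_zero]

lemma Mminor_eq {n m q d : ℕ} (hq : q < m) (hd : 1 ≤ d) (h : m + d = n)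
    (A : Matrix (Fin n) (Fin n) ℝ) :
    Mminor n d (n - 1 - q) A = (-1) ^ (d * (n - 1 - q)) * DeX m (rwX q d) (extX A) := by
  obtain rfl : m = n - d := by omega
  unfold Mminor DeX
  congr 2
  ext i j
  have hi := i.2
  have hj := j.2
  have e : n - (n - 1 - q) - 1 = q := by omega
  simp only [Matrix.of_apply, extX, rwX, e]
  by_cases hiq : (i : ℕ) < q
  · simp only [hiq, if_true]
    rw [dif_pos ⟨by omega, by omega⟩]
  · simp only [hiq, if_false]
    rw [dif_pos ⟨by omega, by omega⟩]

/-- Two skew-symmetric matrices with equal and nonzero minors `M_{j,k}`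
are equal. -/
theorem Mminor_determine_matrix (n : ℕ) (hn : 2 ≤ n)
    (A B : Matrix (Fin n) (Fin n) ℝ) (hA : Aᵀ = -A) (hB : Bᵀ = -B)
    (heq : ∀ j k : ℕ, 1 ≤ j → j ≤ k → k ≤ n - 1 → Mminor n j k A = Mminor n j k B)
    (hne : ∀ j k : ℕ, 1 ≤ j → j ≤ k → k ≤ n - 1 → Mminor n j k A ≠ 0) :
    A = B := by
  have key := mainX n (extX A) (extX B) (extX_skew hA) (extX_skew hB) ?_ ?_
  · ext i j
    have := key i i.2 j j.2
    simpa [extX] using this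
  · intro m q d hq hd h
    have := heq d (n - 1 - q) hd (by omega) (by omega)
    rw [Mminor_eq hq hd h, Mminor_eq hq hd h] at this
    exact mul_left_cancel₀ (pow_ne_zero _ (by norm_num)) this
  · intro m q d hq hd h
    have := hne d (n - 1 - q) hd (by omega) (by omega)
    rw [Mminor_eq hq hd h] at this
    exact right_ne_zero_of_mul this
end
end

section
/- Let A be an n×n real skew-symmetric matrix such that M_{j,k}(A) ≠ 0 for all integers 1 ≤ j ≤ k ≤ n−1. Then there exists t = (t_1,…,t_N) ∈ ℝ^N with t_i ≠ 0 for all i such that A = A(t). -/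
noncomputable section

open Matrix

/-! ### Helper material -/

/-- Splitting of the index set into the two halves. -/
def phiE (n : ℕ) : Fin n ⊕ Fin n ≃ Fin (2 * n) :=
  finSumFinEquiv.trans (finCongr (two_mul n).symm)

lemma phiE_inl (n : ℕ) (p : Fin n) : ((phiE n (Sum.inl p) : Fin (2 * n)) : ℕ) = p := by
  simp [phiE]

lemma phiE_inr (n : ℕ) (p : Fin n) : ((phiE n (Sum.inr p) : Fin (2 * n)) : ℕ) = n + p := by
  simp [phiE, Nat.add_comm]

/-- `M` has block form `[[P, P A],[0, Kᵀ]]` with `P K = 1`. -/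
def BRep {n : ℕ} (M : Matrix (Fin (2 * n)) (Fin (2 * n)) ℝ) (P K A : Matrix (Fin n) (Fin n) ℝ) :
    Prop :=
  P * K = 1 ∧ M.submatrix (phiE n) (phiE n) = Matrix.fromBlocks P (P * A) 0 Kᵀ

lemma BRep.one {n : ℕ} : BRep (n := n) 1 1 1 0 := by
  refine ⟨by simp, ?_⟩
  rw [Matrix.submatrix_one_equiv]
  simp

lemma BRep.mul {n : ℕ} {M1 M2 : Matrix (Fin (2 * n)) (Fin (2 * n)) ℝ}
    {P1 K1 R P2 K2 A2 : Matrix (Fin n) (Fin n) ℝ}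
    (h1 : BRep M1 P1 K1 R) (h2 : BRep M2 P2 K2 A2) :
    BRep (M1 * M2) (P1 * P2) (K2 * K1) (A2 + K2 * R * K2ᵀ) := by
  obtain ⟨e1, f1⟩ := h1
  obtain ⟨e2, f2⟩ := h2
  refine ⟨?_, ?_⟩
  · rw [show P1 * P2 * (K2 * K1) = P1 * (P2 * K2) * K1 by simp only [Matrix.mul_assoc], e2]
    simpa using e1
  · rw [← Matrix.submatrix_mul_equiv M1 M2 (phiE n) (phiE n) (phiE n), f1, f2,
      Matrix.fromBlocks_multiply]
    have : P1 * P2 * (A2 + K2 * R * K2ᵀ) = P1 * (P2 * A2) + P1 * R * K2ᵀ := by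
      rw [mul_add, show P1 * P2 * (K2 * R * K2ᵀ) = P1 * (P2 * K2) * R * K2ᵀ by
        simp only [Matrix.mul_assoc], e2]
      simp only [Matrix.mul_assoc, Matrix.mul_one]
    rw [this]
    simp [Matrix.transpose_mul]

/-- Bidiagonal unipotent matrix. -/
def Bd (n : ℕ) (f : ℕ → ℝ) : Matrix (Fin n) (Fin n) ℝ :=
  Matrix.of fun p q => (if p = q then 1 else 0) + (if (p : ℕ) + 1 = q then f p else 0)

lemma Bd_mul_apply {n : ℕ} (f : ℕ → ℝ) {α : Type} (M : Matrix (Fin n) α ℝ) (p : Fin n)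
    (q : α) : (Bd n f * M) p q
      = M p q + if h : (p : ℕ) + 1 < n then f p * M ⟨p + 1, h⟩ q else 0 := by
  rw [Matrix.mul_apply]
  simp only [Bd, Matrix.of_apply, add_mul, Finset.sum_add_distrib, ite_mul, one_mul, zero_mul,
    Finset.sum_ite_eq, Finset.mem_univ, if_true]
  congr 1
  split_ifs with h
  · rw [Finset.sum_eq_single (⟨p + 1, h⟩ : Fin n)]
    · simp
    · intro b _ hb
      rw [if_neg]
      intro h'
      exact hb (Fin.ext h'.symm)
    · simp
  · apply Finset.sum_eq_zero
    intro b _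
    rw [if_neg]
    have := b.isLt
    omega

lemma Bd_mulVec_apply {n : ℕ} (f : ℕ → ℝ) (v : Fin n → ℝ) (p : Fin n) :
    (Bd n f *ᵥ v) p
      = v p + if h : (p : ℕ) + 1 < n then f p * v ⟨p + 1, h⟩ else 0 := by
  have := Bd_mul_apply f (Matrix.of fun i (_ : Unit) => v i) p ()
  simpa [Matrix.mul_apply, Matrix.mulVec, dotProduct] using this

lemma Bd_zero (n : ℕ) : Bd n (fun _ => 0) = 1 := by
  ext p q
  simp [Bd, Matrix.one_apply]

lemma Bd_mul_Bd {n : ℕ} (f g : ℕ → ℝ) (h : ∀ k, f k * g (k + 1) = 0) :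
    Bd n f * Bd n g = Bd n (fun k => f k + g k) := by
  ext p q
  rw [Bd_mul_apply]
  simp only [Bd, Matrix.of_apply]
  by_cases hp : (p : ℕ) + 1 < n
  · rw [dif_pos hp, mul_add]
    have h1 : f p * (if (((⟨p + 1, hp⟩ : Fin n) : ℕ) + 1 = (q : ℕ)) then
        g ((⟨p + 1, hp⟩ : Fin n) : ℕ) else 0) = 0 := by
      split_ifs
      · exact h _
      · simp
    rw [h1]
    have h2 : ((⟨p + 1, hp⟩ : Fin n) = q) ↔ ((p : ℕ) + 1 = q) := by
      rw [Fin.ext_iff]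
    simp only [h2]
    split_ifs <;> ring
  · rw [dif_neg hp]
    have : ¬ ((p : ℕ) + 1 = q) := by have := q.isLt; omega
    simp [this]

lemma BRep_x {n : ℕ} (i : ℕ) (t : ℝ) (hi : i < n) (h1 : 1 ≤ i) :
    BRep (xMat n i t) (Bd n (fun k => if k + 1 = i then t else 0))
      (Bd n (fun k => if k + 1 = i then -t else 0)) 0 := by
  refine ⟨?_, ?_⟩
  · rw [Bd_mul_Bd, ← Bd_zero]
    · congr 1
      ext k
      split_ifs <;> simp
    · intro k
      by_cases h : k + 1 = i
      · rw [if_neg (show ¬ (k + 1 + 1 = i) by omega)]; simp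
      · simp [h]
  · ext p q
    rcases p with p | p <;> rcases q with q | q <;>
      simp only [Matrix.submatrix_apply, xMat, Matrix.of_apply, phiE_inl, phiE_inr, hi, if_true,
        Matrix.fromBlocks_apply₁₁, Matrix.fromBlocks_apply₁₂, Matrix.fromBlocks_apply₂₁,
        Matrix.fromBlocks_apply₂₂, Bd, Matrix.transpose_apply, Matrix.mul_zero, Matrix.zero_apply,
        Fin.ext_iff] <;>
      have hp := p.isLt <;> have hq := q.isLt <;> split_ifs <;> first | omega | simp

/-- The elementary skew matrix. -/
def Wm (n : ℕ) (t : ℝ) : Matrix (Fin n) (Fin n) ℝ :=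
  Matrix.of fun p q => (if (p : ℕ) + 2 = n ∧ (q : ℕ) + 1 = n then t else 0)
    + (if (p : ℕ) + 1 = n ∧ (q : ℕ) + 2 = n then -t else 0)

lemma BRep_xn {n : ℕ} (hn : 2 ≤ n) (t : ℝ) :
    BRep (xMat n n t) 1 1 (Wm n t) := by
  refine ⟨by simp, ?_⟩
  ext p q
  rcases p with p | p <;> rcases q with q | q <;>
    simp only [Matrix.submatrix_apply, xMat, Matrix.of_apply, phiE_inl, phiE_inr, lt_irrefl,
        if_false,
        Matrix.fromBlocks_apply₁₁, Matrix.fromBlocks_apply₁₂, Matrix.fromBlocks_apply₂₁,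
        Matrix.fromBlocks_apply₂₂, Wm, Matrix.transpose_one, Matrix.one_mul, Matrix.zero_apply,
        Matrix.one_apply, Fin.ext_iff] <;>
      have hp := p.isLt <;> have hq := q.isLt <;> split_ifs <;> first | omega | simp

/-- Product along a list of (index, parameter) pairs. -/
def Gl (n : ℕ) (l : List (ℕ × ℝ)) : Matrix (Fin (2 * n)) (Fin (2 * n)) ℝ :=
  (l.map (fun p => xMat n p.1 p.2)).prod

lemma Gl_append (n : ℕ) (l1 l2 : List (ℕ × ℝ)) : Gl n (l1 ++ l2) = Gl n l1 * Gl n l2 := by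
  simp [Gl]

lemma Gl_cons (n : ℕ) (p : ℕ × ℝ) (l : List (ℕ × ℝ)) :
    Gl n (p :: l) = xMat n p.1 p.2 * Gl n l := by
  simp [Gl]

lemma run_aux {n : ℕ} (b : ℕ) (hb : 1 ≤ b) (f : ℕ → ℝ) (len : ℕ) (hl : b + len ≤ n) :
    ∃ K, BRep (Gl n ((List.range' b len).reverse.map (fun i => (i, f (i - 1)))))
      (Bd n (fun k => if b ≤ k + 1 ∧ k + 1 < b + len then f k else 0)) K 0 := by
  induction len with
  | zero =>
    refine ⟨1, ?_⟩
    have : (fun k => if b ≤ k + 1 ∧ k + 1 < b + 0 then f k else 0) = fun _ => (0 : ℝ) := by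
      ext k
      rw [if_neg]
      omega
    rw [this, Bd_zero]
    simpa [Gl] using BRep.one
  | succ len ih =>
    obtain ⟨K, hK⟩ := ih (by omega)
    have h1 := (BRep_x (n := n) (b + len) (f (b + len - 1)) (by omega) (by omega)).mul hK
    rw [List.range'_concat, List.reverse_append]
    simp only [List.reverse_cons, List.reverse_nil, List.nil_append, List.singleton_append,
      List.map_cons, one_mul]
    rw [Gl_cons]
    refine ⟨K * Bd n (fun k => if k + 1 = b + len then -f (b + len - 1) else 0), ?_⟩
    convert h1 using 1
    · rw [Bd_mul_Bd]
      · congr 1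
        ext k
        by_cases h : k + 1 = b + len
        · rw [if_pos (by omega), if_pos h, if_neg (by omega), ← h]; simp
        · rw [if_neg h, zero_add]
          congr 1
          apply propext
          omega
      · intro k
        by_cases h : k + 1 = b + len
        · rw [if_neg (show ¬ (b ≤ k + 1 + 1 ∧ k + 1 + 1 < b + len) by omega)]; simp
        · simp [h]
    · simp

lemma run_rep {n : ℕ} (a b : ℕ) (hb : 1 ≤ b) (han : a + 1 ≤ n) (hab : b ≤ a + 1) (f : ℕ → ℝ)
    (f0 : ∀ k, ¬ (b ≤ k + 1 ∧ k + 1 < a + 1) → f k = 0)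
    (f1 : ∀ k, (b ≤ k + 1 ∧ k + 1 < a + 1) → f k ≠ 0) :
    ∃ l : List (ℕ × ℝ), l.map Prod.fst = decRun a b ∧ (∀ p ∈ l, p.2 ≠ 0) ∧
      ∃ K, BRep (Gl n l) (Bd n f) K 0 := by
  obtain ⟨K, hK⟩ := run_aux (n := n) b hb f (a + 1 - b) (by omega)
  refine ⟨(List.range' b (a + 1 - b)).reverse.map (fun i => (i, f (i - 1))), ?_, ?_, K, ?_⟩
  rotate_left 2
  · convert hK using 1
    congr 1
    ext k
    split_ifs with h
    · rfl
    · apply f0; omega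
  · simp [decRun, Function.comp_def]
  · intro p hp
    simp only [List.mem_map, List.mem_reverse, List.mem_range'_1] at hp
    obtain ⟨i, hi, rfl⟩ := hp
    apply f1
    omega

/-- Extension of a vector by zero. -/
def xt {n : ℕ} (v : Fin n → ℝ) (k : ℕ) : ℝ := if h : k < n then v ⟨k, h⟩ else 0

lemma xt_fin {n : ℕ} (v : Fin n → ℝ) (p : Fin n) : xt v p = v p := by
  simp [xt]

lemma xt_ge {n : ℕ} (v : Fin n → ℝ) (k : ℕ) (h : n ≤ k) : xt v k = 0 := by
  simp [xt, h]

lemma Bd_mulVec_xt {n : ℕ} (f : ℕ → ℝ) (v : Fin n → ℝ) (k : ℕ) (hk : k < n) :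
    xt (Bd n f *ᵥ v) k = xt v k + f k * xt v (k + 1) := by
  have := Bd_mulVec_apply f v ⟨k, hk⟩
  simp only [xt, hk, dif_pos, this]
  split_ifs <;> simp

lemma block_elim {n : ℕ} (s : ℕ) (hs : s + 2 ≤ n) (x y : Fin n → ℝ)
    (x0 : ∀ k, k ≤ s → xt x k = 0) (y0 : ∀ k, k < s → xt y k = 0)
    (hx : ∀ k, s + 1 ≤ k → k < n → xt x k ≠ 0)
    (hp : ∀ k, s ≤ k → k + 1 < n → xt y k * xt x (k + 1) - xt x k * xt y (k + 1) ≠ 0) :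
    ∃ f2 f1 : ℕ → ℝ,
      (∀ k, ¬ (s + 1 ≤ k + 1 ∧ k + 1 < n - 2 + 1) → f2 k = 0) ∧
      (∀ k, (s + 1 ≤ k + 1 ∧ k + 1 < n - 2 + 1) → f2 k ≠ 0) ∧
      (∀ k, ¬ (s + 2 ≤ k + 1 ∧ k + 1 < n - 1 + 1) → f1 k = 0) ∧
      (∀ k, (s + 2 ≤ k + 1 ∧ k + 1 < n - 1 + 1) → f1 k ≠ 0) ∧
      ∃ α β γ : ℝ, α ≠ 0 ∧ β ≠ 0 ∧
        (∀ k, k < n → xt (Bd n f2 *ᵥ (Bd n f1 *ᵥ x)) k = if k + 1 = n then α else 0) ∧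
        (∀ k, k < n → xt (Bd n f2 *ᵥ (Bd n f1 *ᵥ y)) k =
          if k + 1 = n then γ else if k + 2 = n then β else 0) := by
  set f1 : ℕ → ℝ := fun k => if s + 2 ≤ k + 1 ∧ k + 1 < n - 1 + 1 then -xt x k / xt x (k + 1) else 0
    with hf1
  set z : ℕ → ℝ := fun k => xt y k + f1 k * xt y (k + 1) with hz
  have hzne : ∀ k, s ≤ k → k + 1 < n → z k ≠ 0 := by
    intro k h1 h2 h0
    have h3 := hx (k + 1) (by omega) h2
    apply hp k h1 h2
    simp only [hz, hf1] at h0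
    by_cases hk : s + 2 ≤ k + 1
    · rw [if_pos ⟨hk, by omega⟩] at h0
      field_simp at h0
      linarith
    · rw [if_neg (by omega)] at h0
      have : xt y k = 0 := by linarith
      rw [this, x0 k (by omega)]
      ring
  set f2 : ℕ → ℝ := fun k => if s + 1 ≤ k + 1 ∧ k + 1 < n - 2 + 1 then -z k / z (k + 1) else 0
    with hf2
  have hX1 : ∀ k, k < n → xt (Bd n f1 *ᵥ x) k = if k + 1 = n then xt x (n - 1) else 0 := by
    intro k hk
    rw [Bd_mulVec_xt _ _ _ hk]
    by_cases h : k + 1 = n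
    · rw [if_pos h, xt_ge x (k + 1) (by omega), mul_zero, add_zero]
      congr 1; omega
    · rw [if_neg h]
      simp only [hf1]
      by_cases h2 : s + 2 ≤ k + 1
      · rw [if_pos ⟨h2, by omega⟩]
        have := hx (k + 1) (by omega) (by omega)
        field_simp
        ring
      · rw [if_neg (by omega), x0 k (by omega)]; simp
  have hY1 : ∀ k, k < n → xt (Bd n f1 *ᵥ y) k = z k := by
    intro k hk
    rw [Bd_mulVec_xt _ _ _ hk]
  refine ⟨f2, f1, ?_, ?_, ?_, ?_, xt x (n - 1), z (n - 2), z (n - 1), ?_, ?_, ?_, ?_⟩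
  · intro k h; simp only [hf2, if_neg h]
  · intro k h
    simp only [hf2, if_pos h]
    exact div_ne_zero (neg_ne_zero.mpr (hzne k (by omega) (by omega)))
      (hzne (k + 1) (by omega) (by omega))
  · intro k h; simp only [hf1, if_neg h]
  · intro k h
    simp only [hf1, if_pos h]
    exact div_ne_zero (neg_ne_zero.mpr (hx k (by omega) (by omega)))
      (hx (k + 1) (by omega) (by omega))
  · exact hx _ (by omega) (by omega)
  · exact hzne _ (by omega) (by omega)
  · intro k hk
    rw [Bd_mulVec_xt _ _ _ hk, hX1 k hk]
    by_cases h : k + 1 = n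
    · rw [if_pos h, xt_ge _ (k + 1) (by omega)]; simp
    · rw [hX1 (k + 1) (by omega)]
      by_cases h2 : k + 1 + 1 = n
      · have : f2 k = 0 := by simp only [hf2]; rw [if_neg (by omega)]
        rw [this]; simp
      · simp [h2]
  · intro k hk
    rw [Bd_mulVec_xt _ _ _ hk, hY1 k hk]
    by_cases h : k + 1 = n
    · rw [if_pos h, xt_ge _ (k + 1) (by omega), mul_zero, add_zero]
      congr 1; omega
    · rw [hY1 (k + 1) (by omega), if_neg h]
      by_cases h2 : k + 2 = n
      · have : f2 k = 0 := by simp only [hf2]; rw [if_neg (by omega)]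
        rw [this, if_pos h2, zero_mul, add_zero]
        congr 1; omega
      · rw [if_neg h2]
        simp only [hf2]
        by_cases h3 : s ≤ k
        · rw [if_pos (by omega)]
          have := hzne (k + 1) (by omega) (by omega)
          field_simp
          ring
        · rw [if_neg (by omega)]
          simp only [hz, hf1]
          rw [y0 k (by omega), if_neg (by omega)]
          simp

/-- Nonsingularity conditions. -/
def NS (n s : ℕ) (A : Matrix (Fin n) (Fin n) ℝ) : Prop :=
  ∀ a i, s ≤ a → a < i → i + 1 ≤ n → ∀ c : Fin n → ℝ,
    (∀ r : Fin n, c r ≠ 0 → (s ≤ (r : ℕ) ∧ (r : ℕ) < a) ∨ i ≤ (r : ℕ)) →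
    (∀ j : Fin n, (j : ℕ) + i < a + n → (c ᵥ* A) j = 0) → c = 0

/-- Schur complement with respect to rows and columns `S`, `T`. -/
def Sch {n : ℕ} (A : Matrix (Fin n) (Fin n) ℝ) (S T : Fin n) : Matrix (Fin n) (Fin n) ℝ :=
  Matrix.of fun i j => A i j - (A i S * A j T - A i T * A j S) / A S T

lemma vecMul_Sch {n : ℕ} (A : Matrix (Fin n) (Fin n) ℝ) (S T : Fin n) (c : Fin n → ℝ)
    (j : Fin n) : (c ᵥ* Sch A S T) j
      = (c ᵥ* A) j - ((c ᵥ* A) S * A j T - (c ᵥ* A) T * A j S) / A S T := by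
  simp only [Matrix.vecMul, dotProduct, Sch, Matrix.of_apply, Finset.sum_mul]
  rw [← Finset.sum_sub_distrib, Finset.sum_div, ← Finset.sum_sub_distrib]
  apply Finset.sum_congr rfl
  intro i _
  ring

lemma vecMul_add_two {n : ℕ} (A : Matrix (Fin n) (Fin n) ℝ) (S T : Fin n) (c : Fin n → ℝ)
    (α β : ℝ) (j : Fin n) :
    ((c + Pi.single S α + Pi.single T β) ᵥ* A) j = (c ᵥ* A) j + α * A S j + β * A T j := by
  rw [Matrix.add_vecMul, Matrix.add_vecMul]
  simp [Matrix.vecMul, dotProduct]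

lemma Sch_skew {n : ℕ} (A : Matrix (Fin n) (Fin n) ℝ) (S T : Fin n)
    (hA : ∀ i j, A i j = -A j i) (i j : Fin n) : Sch A S T i j = -Sch A S T j i := by
  simp only [Sch, Matrix.of_apply]
  rw [hA i j]
  ring

lemma Sch_supp {n s : ℕ} (A : Matrix (Fin n) (Fin n) ℝ) (S T : Fin n)
    (hS : (S : ℕ) = s) (hT : (T : ℕ) = s + 1)
    (hA : ∀ i j, A i j = -A j i) (h0 : A S T ≠ 0) (hs : ∀ i j : Fin n, (i : ℕ) < s → A i j = 0)
    (i j : Fin n) (hi : (i : ℕ) < s + 2) : Sch A S T i j = 0 := by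
  have hd : ∀ i, A i i = 0 := fun i => by have := hA i i; linarith
  simp only [Sch, Matrix.of_apply]
  by_cases h1 : (i : ℕ) < s
  · rw [hs i j h1, hs i S h1, hs i T h1]; simp
  by_cases h2 : (i : ℕ) = s
  · have : i = S := Fin.ext (by omega)
    subst this
    rw [hd, hA i j]
    field_simp
    ring
  · have : i = T := Fin.ext (by omega)
    subst this
    rw [hd, hA i j, hA i S]
    field_simp
    ring

lemma NS_Sch {n s : ℕ} (A : Matrix (Fin n) (Fin n) ℝ) (S T : Fin n)
    (hS : (S : ℕ) = s) (hT : (T : ℕ) = s + 1)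
    (hA : ∀ i j, A i j = -A j i) (h0 : A S T ≠ 0) (hs : ∀ i j : Fin n, (i : ℕ) < s → A i j = 0)
    (hN : NS n s A) : NS n (s + 2) (Sch A S T) := by
  intro a i ha hi hin c hc hz
  have hd : ∀ i, A i i = 0 := fun i => by have := hA i i; linarith
  set c' := c + Pi.single S (-(c ᵥ* A) T / A S T) + Pi.single T ((c ᵥ* A) S / A S T) with hc'
  have e1 : (c' ᵥ* A) S = 0 := by
    rw [hc', vecMul_add_two, hd, hA T S]; field_simp; ring
  have e2 : (c' ᵥ* A) T = 0 := by
    rw [hc', vecMul_add_two, hd]; field_simp; ring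
  have hST : S ≠ T := by intro h; rw [h] at hS; omega
  have key : c' = 0 := by
    apply hN a i (by omega) hi hin
    · intro r hr
      by_cases h1 : r = S
      · subst h1; left; omega
      by_cases h2 : r = T
      · subst h2; left; omega
      have : c' r = c r := by simp [hc', h1, h2]
      rw [this] at hr
      have := hc r hr
      omega
    · intro j hj
      have h1 := vecMul_Sch A S T c' j
      have h2 : (c' ᵥ* Sch A S T) j = (c ᵥ* Sch A S T) j := by
        rw [hc', vecMul_add_two, Sch_supp A S T hS hT hA h0 hs S j (by omega),
          Sch_supp A S T hS hT hA h0 hs T j (by omega)]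
        simp
      rw [e1, e2, h2, hz j hj] at h1
      simpa using h1.symm
  funext r
  by_cases h1 : c r = 0
  · exact h1
  have h2 := hc r h1
  have h3 : r ≠ S := by rintro rfl; omega
  have h4 : r ≠ T := by rintro rfl; omega
  have := congrFun key r
  simpa [hc', Pi.single_apply, h3, h4] using this

/-- Upper unitriangular, with the first `s` rows those of the identity. -/
def Uni {n : ℕ} (s : ℕ) (P : Matrix (Fin n) (Fin n) ℝ) : Prop :=
  (∀ i j : Fin n, (j : ℕ) < i → P i j = 0) ∧ (∀ i, P i i = 1) ∧
    (∀ i j : Fin n, (i : ℕ) < s → i ≠ j → P i j = 0)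

lemma Uni.bd {n s : ℕ} {P : Matrix (Fin n) (Fin n) ℝ} (h : Uni s P) (f : ℕ → ℝ)
    (hf : ∀ k, k < s → f k = 0) : Uni s (Bd n f * P) := by
  obtain ⟨h1, h2, h3⟩ := h
  refine ⟨?_, ?_, ?_⟩
  · intro i j hij
    rw [Bd_mul_apply, h1 i j hij]
    split_ifs with h
    · rw [h1 ⟨i + 1, h⟩ j (by simp; omega)]; simp
    · simp
  · intro i
    rw [Bd_mul_apply, h2 i]
    split_ifs with h
    · rw [h1 ⟨i + 1, h⟩ i (by simp)]; simp
    · simp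
  · intro i j hi hij
    rw [Bd_mul_apply, h3 i j hi hij, hf i hi]
    simp

lemma Uni.mono {n s s' : ℕ} (hs : s ≤ s') {P : Matrix (Fin n) (Fin n) ℝ} (h : Uni s' P) :
    Uni s P :=
  ⟨h.1, h.2.1, fun i j hi => h.2.2 i j (by omega)⟩

lemma Uni.row_eq {n s : ℕ} {P : Matrix (Fin n) (Fin n) ℝ} (h : Uni s P) (i : Fin n)
    (hi : (i : ℕ) < s) (B : Matrix (Fin n) (Fin n) ℝ) (j : Fin n) : (P * B) i j = B i j := by
  rw [Matrix.mul_apply, Finset.sum_eq_single i]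
  · rw [h.2.1]; simp
  · intro b _ hb
    rw [h.2.2 i b hi (Ne.symm hb)]; simp
  · simp

/-- Anti-triangular vanishing of `P A`. -/
def Anti {n : ℕ} (s : ℕ) (A P : Matrix (Fin n) (Fin n) ℝ) : Prop :=
  ∀ i j : Fin n, s ≤ (i : ℕ) → (i : ℕ) + j + 2 ≤ n + s → (P * A) i j = 0

lemma AST_ne {n s : ℕ} (A : Matrix (Fin n) (Fin n) ℝ) (S T : Fin n)
    (hS : (S : ℕ) = s) (hT : (T : ℕ) = s + 1)
    (hA : ∀ i j, A i j = -A j i) (hs : ∀ i j : Fin n, (i : ℕ) < s → A i j = 0)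
    (hN : NS n s A) : A S T ≠ 0 := by
  intro h0
  have hd : ∀ i, A i i = 0 := fun i => by have := hA i i; linarith
  have hTn := T.isLt
  have hst : A T S = 0 := by rw [hA, h0]; simp
  have col : ∀ i j : Fin n, (j : ℕ) < s → A i j = 0 := by
    intro i j hj; rw [hA, hs j i hj]; simp
  by_cases h : s + 2 = n
  · have := hN s (s + 1) le_rfl (by omega) (by omega) (Pi.single T 1) ?_ ?_
    · have := congrFun this T
      simp at this
    · intro r hr
      by_cases hr' : r = T
      · subst hr'; right; omega
      · simp [hr'] at hr
    · intro j hj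
      rw [Matrix.single_one_vecMul]
      by_cases h1 : (j : ℕ) < s
      · exact col _ _ h1
      · have : j = S := Fin.ext (by omega)
        rw [this]; exact hst
  · have := hN (s + 1) (n - 1) (by omega) (by omega) (by omega) (Pi.single S 1) ?_ ?_
    · have := congrFun this S
      simp at this
    · intro r hr
      by_cases hr' : r = S
      · subst hr'; left; omega
      · simp [hr'] at hr
    · intro j hj
      rw [Matrix.single_one_vecMul]
      by_cases h1 : (j : ℕ) < s
      · exact col _ _ h1
      by_cases h2 : (j : ℕ) = s
      · have : j = S := Fin.ext (by omega)
        rw [this]; exact hd _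
      · have : j = T := Fin.ext (by omega)
        rw [this]; exact h0

lemma nonvan_x {n s : ℕ} (A P : Matrix (Fin n) (Fin n) ℝ) (S T : Fin n)
    (hS : (S : ℕ) = s) (hT : (T : ℕ) = s + 1)
    (hA : ∀ i j, A i j = -A j i) (hs : ∀ i j : Fin n, (i : ℕ) < s → A i j = 0)
    (hN : NS n s A) (hU : Uni (s + 2) P) (hAT : Anti (s + 2) (Sch A S T) P)
    (i : Fin n) (hi : s + 1 ≤ (i : ℕ)) : (P * A) i S ≠ 0 := by
  have h0 := AST_ne A S T hS hT hA hs hN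
  have hd : ∀ i, A i i = 0 := fun i => by have := hA i i; linarith
  by_cases hi1 : (i : ℕ) = s + 1
  · rw [hU.row_eq i (by omega)]
    have : i = T := Fin.ext (by omega)
    rw [this, hA]
    simpa using h0
  intro hx
  have hiS : i ≠ S := by rintro rfl; omega
  rw [Matrix.mul_apply_eq_vecMul] at hx
  set c := P i with hc
  set c' := c + Pi.single S (-(c ᵥ* A) T / A S T) + Pi.single T 0 with hc'
  have e1 : (c' ᵥ* A) S = 0 := by
    rw [hc', vecMul_add_two, hd, hx]; simp
  have e2 : (c' ᵥ* A) T = 0 := by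
    rw [hc', vecMul_add_two, hd]; field_simp; ring
  have key : c' = 0 := by
    apply hN (s + 1) i (by omega) (by omega) (by have := i.isLt; omega)
    · intro r hr
      by_cases h1 : r = S
      · subst h1; left; omega
      have : c' r = P i r := by simp [hc', hc, h1]
      rw [this] at hr
      right
      by_contra h2
      exact hr (hU.1 i r (by omega))
    · intro j hj
      have h1 := vecMul_Sch A S T c' j
      have h2 : (c' ᵥ* Sch A S T) j = (c ᵥ* Sch A S T) j := by
        rw [hc', vecMul_add_two, Sch_supp A S T hS hT hA h0 hs S j (by omega),
          Sch_supp A S T hS hT hA h0 hs T j (by omega)]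
        simp
      have h3 := hAT i j (by omega) (by omega)
      rw [Matrix.mul_apply_eq_vecMul] at h3
      rw [e1, e2, h2, hc, h3] at h1
      simpa using h1.symm
  have := congrFun key i
  simp [hc', hc, hU.2.1, hiS] at this

lemma nonvan_p {n s : ℕ} (A P : Matrix (Fin n) (Fin n) ℝ) (S T : Fin n)
    (hS : (S : ℕ) = s) (hT : (T : ℕ) = s + 1)
    (hA : ∀ i j, A i j = -A j i) (hs : ∀ i j : Fin n, (i : ℕ) < s → A i j = 0)
    (hN : NS n s A) (hU : Uni (s + 2) P) (hAT : Anti (s + 2) (Sch A S T) P)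
    (i i' : Fin n) (hi : s ≤ (i : ℕ)) (hii : (i' : ℕ) = i + 1) :
    (P * A) i T * (P * A) i' S - (P * A) i S * (P * A) i' T ≠ 0 := by
  have h0 := AST_ne A S T hS hT hA hs hN
  have hd : ∀ i, A i i = 0 := fun i => by have := hA i i; linarith
  have hA0 : ∀ k j : Fin n, (k : ℕ) < s + 2 → (P * Sch A S T) k j = 0 := by
    intro k j hk
    rw [hU.row_eq k hk, Sch_supp A S T hS hT hA h0 hs k j hk]
  by_cases hi1 : (i : ℕ) = s
  · rw [hU.row_eq i (by omega), hU.row_eq i (by omega), hU.row_eq i' (by omega),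
      hU.row_eq i' (by omega)]
    have h1 : i = S := Fin.ext (by omega)
    have h2 : i' = T := Fin.ext (by omega)
    rw [h1, h2, hd, hA T S]
    simpa using h0
  intro hp
  -- general: a nonzero combination of rows `i`, `i'` killing both columns
  have claim : ∀ l m : ℝ, l * (P * A) i S + m * (P * A) i' S = 0 →
      l * (P * A) i T + m * (P * A) i' T = 0 → l = 0 ∧ m = 0 := by
    intro l m e1 e2
    set c : Fin n → ℝ := l • P i + m • P i' with hc
    have hcB : ∀ (B : Matrix (Fin n) (Fin n) ℝ) j,
        (c ᵥ* B) j = l * (P * B) i j + m * (P * B) i' j := by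
      intro B j
      rw [hc, Matrix.add_vecMul, Matrix.smul_vecMul, Matrix.smul_vecMul,
        Matrix.mul_apply_eq_vecMul, Matrix.mul_apply_eq_vecMul]
      simp
    have key : c = 0 := by
      apply hN s i le_rfl (by omega) (by have := i.isLt; omega)
      · intro r hr
        right
        by_contra h2
        apply hr
        simp [hc, hU.1 i r (by omega), hU.1 i' r (by omega)]
      · intro j hj
        have h1 := vecMul_Sch A S T c j
        rw [hcB A S, hcB A T, e1, e2, hcB (Sch A S T) j] at h1
        have h2 : (P * Sch A S T) i j = 0 := by
          by_cases h : (i : ℕ) < s + 2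
          · exact hA0 i j h
          · exact hAT i j (by omega) (by omega)
        have h3 : (P * Sch A S T) i' j = 0 := by
          by_cases h : (i' : ℕ) < s + 2
          · exact hA0 i' j h
          · exact hAT i' j (by omega) (by omega)
        rw [h2, h3] at h1
        simpa using h1.symm
    have k1 := congrFun key i
    have k2 := congrFun key i'
    simp only [hc, Pi.add_apply, Pi.smul_apply, smul_eq_mul, hU.2.1, Pi.zero_apply,
      hU.1 i' i (by omega)] at k1 k2
    have : l = 0 := by linarith
    subst this
    exact ⟨rfl, by linarith⟩
  have hx := nonvan_x A P S T hS hT hA hs hN hU hAT i (by omega)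
  exact hx (by
    have := (claim ((P * A) i' S) (-(P * A) i S) (by ring) (by linarith)).2
    linarith)

lemma Bd_Bd_row_zero {n : ℕ} (f g : ℕ → ℝ) (B : Matrix (Fin n) (Fin n) ℝ) (i j : Fin n)
    (h : ∀ k : Fin n, (k : ℕ) ≤ i + 2 → B k j = 0) : (Bd n f * (Bd n g * B)) i j = 0 := by
  have h1 : ∀ k : Fin n, (k : ℕ) ≤ i + 1 → (Bd n g * B) k j = 0 := by
    intro k hk
    rw [Bd_mul_apply, h k (by omega)]
    split_ifs with h2
    · rw [h ⟨k + 1, h2⟩ (by simp; omega)]; simp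
    · simp
  rw [Bd_mul_apply, h1 i (by omega)]
  split_ifs with h2
  · rw [h1 ⟨i + 1, h2⟩ (by simp)]; simp
  · simp

theorem key_ind (n : ℕ) (hn : 2 ≤ n) : ∀ d m, m + d = n / 2 →
    ∀ A : Matrix (Fin n) (Fin n) ℝ, (∀ i j, A i j = -A j i) →
    (∀ i j : Fin n, (i : ℕ) < 2 * m → A i j = 0) → NS n (2 * m) A →
    ∃ l : List (ℕ × ℝ), l.map Prod.fst = ((List.range' m d).map (blk n)).flatten ∧
      (∀ p ∈ l, p.2 ≠ 0) ∧ ∃ P K, BRep (Gl n l) P K A ∧ Uni (2 * m) P ∧ Anti (2 * m) A P := by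
  intro d
  induction d with
  | zero =>
    intro m hm A hA hs _
    have hA0 : A = 0 := by
      ext i j
      by_cases hi : (i : ℕ) < 2 * m
      · simp [hs i j hi]
      by_cases hj : (j : ℕ) < 2 * m
      · rw [hA]; simp [hs j i hj]
      have : i = j := Fin.ext (by have := i.isLt; have := j.isLt; omega)
      subst this
      have := hA i i
      simp; linarith
    subst hA0
    refine ⟨[], by simp, by simp, 1, 1, by simpa [Gl] using BRep.one, ⟨?_, ?_, ?_⟩, ?_⟩
    · intro i j h
      rw [Matrix.one_apply_ne]
      rintro rfl; omega
    · simp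
    · intro i j _ h
      exact Matrix.one_apply_ne h
    · intro i j _ _
      simp
  | succ d ih =>
    intro m hm A hA hs hN
    obtain ⟨s, hsm⟩ : ∃ s, s = 2 * m := ⟨_, rfl⟩
    have hsn : s + 2 ≤ n := by omega
    rw [← hsm] at hs hN ⊢
    obtain ⟨S, hS⟩ : ∃ S : Fin n, (S : ℕ) = s := ⟨⟨s, by omega⟩, rfl⟩
    obtain ⟨T, hT⟩ : ∃ T : Fin n, (T : ℕ) = s + 1 := ⟨⟨s + 1, by omega⟩, rfl⟩
    have h0 := AST_ne A S T hS hT hA hs hN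
    have hd : ∀ i, A i i = 0 := fun i => by have := hA i i; linarith
    have h2m : 2 * (m + 1) = s + 2 := by omega
    obtain ⟨l', hl1, hl2, P', K', hrep, hU, hAT⟩ := ih (m + 1) (by omega) (Sch A S T)
      (Sch_skew A S T hA) (by rw [h2m]; exact Sch_supp A S T hS hT hA h0 hs)
      (by rw [h2m]; exact NS_Sch A S T hS hT hA h0 hs hN)
    rw [h2m] at hU hAT
    have colz : ∀ i j : Fin n, (j : ℕ) < s → A i j = 0 := by
      intro i j hj; rw [hA, hs j i hj]; simp
    set x : Fin n → ℝ := fun i => (P' * A) i S with hx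
    set y : Fin n → ℝ := fun i => (P' * A) i T with hy
    obtain ⟨f2, f1, f20, f2n, f10, f1n, α, β, γ, hα, hβ, hX, hY⟩ :=
      block_elim s hsn x y
        (by
          intro k hk
          have hkn : k < n := by omega
          simp only [xt, hkn, dif_pos, hx]
          rw [hU.row_eq _ (by simp; omega)]
          by_cases h : k = s
          · have : (⟨k, hkn⟩ : Fin n) = S := Fin.ext (by simp; omega)
            rw [this, hd]
          · exact hs _ _ (by simp; omega))
        (by
          intro k hk
          have hkn : k < n := by omega
          simp only [xt, hkn, dif_pos, hy]
          rw [hU.row_eq _ (by simp; omega)]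
          exact hs _ _ (by simpa using hk))
        (by
          intro k hk hkn
          simp only [xt, hkn, dif_pos, hx]
          exact nonvan_x A P' S T hS hT hA hs hN hU hAT _ (by simpa using hk))
        (by
          intro k hk hkn
          have hkn' : k < n := by omega
          simp only [xt, hkn, hkn', dif_pos, hx, hy]
          exact nonvan_p A P' S T hS hT hA hs hN hU hAT _ _ (by simpa using hk) rfl)
    obtain ⟨l2, a2, b2, K2, r2⟩ := run_rep (n := n) (n - 2) (s + 1) (by omega) (by omega) (by omega)
      f2 f20 f2n
    obtain ⟨l1, a1, b1, K1, r1⟩ := run_rep (n := n) (n - 1) (s + 2) (by omega) (by omega) (by omega)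
      f1 f10 f1n
    set t0 : ℝ := -(α * β) / A S T with ht0
    have ht0n : t0 ≠ 0 := div_ne_zero (neg_ne_zero.mpr (mul_ne_zero hα hβ)) h0
    have hr := (BRep_xn hn t0).mul (r2.mul (r1.mul hrep))
    set P := Bd n f2 * (Bd n f1 * P') with hP
    have hPS : ∀ i : Fin n, (P * A) i S = if (i : ℕ) + 1 = n then α else 0 := by
      intro i
      have := hX i i.isLt
      rw [xt_fin] at this
      rw [← this, hP, Matrix.mul_assoc, Matrix.mul_assoc]
      rfl
    have hPT : ∀ i : Fin n, (P * A) i T =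
        if (i : ℕ) + 1 = n then γ else if (i : ℕ) + 2 = n then β else 0 := by
      intro i
      have := hY i i.isLt
      rw [xt_fin] at this
      rw [← this, hP, Matrix.mul_assoc, Matrix.mul_assoc]
      rfl
    refine ⟨(n, t0) :: (l2 ++ (l1 ++ l')), ?_, ?_, P, K' * K1 * K2, ?_, ?_, ?_⟩
    · rw [List.range'_succ]
      simp [blk, a1, a2, hl1, ← hsm]
    · intro p hp
      simp only [List.mem_cons, List.mem_append] at hp
      rcases hp with rfl | hp | hp | hp
      · exact ht0n
      · exact b2 p hp
      · exact b1 p hp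
      · exact hl2 p hp
    · rw [Gl_cons, Gl_append, Gl_append]
      convert hr using 1
      · simp
      · simp
      · simp only [Matrix.mul_zero, Matrix.zero_mul, add_zero]
        have hPK : P * (K' * K1 * K2) = 1 := by simpa using hr.1
        have hKP : (K' * K1 * K2) * P = 1 := mul_eq_one_comm.mp hPK
        have hD : P * (A - Sch A S T) * Pᵀ = Wm n t0 := by
          have hrow : ∀ i j, (P * (A - Sch A S T)) i j
              = ((P * A) i S * A j T - (P * A) i T * A j S) / A S T := by
            intro i j
            rw [mul_sub, Matrix.sub_apply, Matrix.mul_apply_eq_vecMul P (Sch A S T),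
              vecMul_Sch, ← Matrix.mul_apply_eq_vecMul]
            ring
          ext i j
          rw [Matrix.mul_apply]
          have : ∀ k, (P * (A - Sch A S T)) i k * Pᵀ k j =
              ((P * A) i S * (P j k * A k T) - (P * A) i T * (P j k * A k S)) / A S T := by
            intro k
            rw [hrow, Matrix.transpose_apply]
            ring
          simp only [this]
          rw [← Finset.sum_div, Finset.sum_sub_distrib, ← Finset.mul_sum, ← Finset.mul_sum,
            ← Matrix.mul_apply, ← Matrix.mul_apply, hPS, hPS, hPT, hPT]
          simp only [Wm, Matrix.of_apply, ht0]
          have hi := i.isLt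
          have hj := j.isLt
          split_ifs <;> first | omega | ring
        rw [← hD]
        have : (K' * K1 * K2) * (P * (A - Sch A S T) * Pᵀ) * (K' * K1 * K2)ᵀ
            = ((K' * K1 * K2) * P) * (A - Sch A S T) * ((K' * K1 * K2) * P)ᵀ := by
          rw [Matrix.transpose_mul (K' * K1 * K2) P]
          simp only [Matrix.mul_assoc]
        rw [this, hKP]
        simp
    · apply Uni.bd
      · apply Uni.bd
        · exact hU.mono (by omega)
        · intro k hk; exact f10 k (by omega)
      · intro k hk; exact f20 k (by omega)
    · intro i j hi hij
      by_cases hj : (j : ℕ) < s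
      · rw [Matrix.mul_apply]
        apply Finset.sum_eq_zero
        intro k _
        rw [colz k j hj, mul_zero]
      have h1 := vecMul_Sch A S T (P i) j
      simp only [← Matrix.mul_apply_eq_vecMul] at h1
      have hz : (P * Sch A S T) i j = 0 := by
        rw [hP, Matrix.mul_assoc, Matrix.mul_assoc]
        by_cases hin : (i : ℕ) + 2 = n
        · have hSz : ∀ k, Sch A S T k j = 0 := by
            intro k
            rw [Sch_skew A S T hA, Sch_supp A S T hS hT hA h0 hs j k (by omega), neg_zero]
          apply Bd_Bd_row_zero
          intro k _
          rw [Matrix.mul_apply]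
          apply Finset.sum_eq_zero
          intro k' _
          rw [hSz, mul_zero]
        · apply Bd_Bd_row_zero
          intro k hk
          by_cases hk2 : (k : ℕ) < s + 2
          · rw [hU.row_eq k hk2, Sch_supp A S T hS hT hA h0 hs k j hk2]
          · exact hAT k j (by omega) (by omega)
      rw [hz, hPS, hPT, if_neg (by omega), if_neg (by omega)] at h1
      by_cases hin : (i : ℕ) + 2 = n
      · have : j = S := Fin.ext (by omega)
        subst this
        rw [hd] at h1
        simpa using h1.symm
      · rw [if_neg hin] at h1
        simpa using h1.symm

lemma NS_of_Mminor (n : ℕ) (A : Matrix (Fin n) (Fin n) ℝ)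
    (hne : ∀ j k : ℕ, 1 ≤ j → j ≤ k → k ≤ n - 1 → Mminor n j k A ≠ 0) : NS n 0 A := by
  intro a i _ hai hin c hc hz
  have hM := hne (i - a) (n - 1 - a) (by omega) (by omega) (by omega)
  unfold Mminor at hM
  have hdet := right_ne_zero_of_mul hM
  set row : Fin (n - (i - a)) → Fin n := fun p =>
    if (p : ℕ) < n - (n - 1 - a) - 1 then ⟨(p : ℕ), by have := p.isLt; omega⟩
          else ⟨(p : ℕ) + (i - a), by have := p.isLt; omega⟩ with hrow
  have hrv : ∀ p, ((row p : Fin n) : ℕ) = if (p : ℕ) < a then (p : ℕ) else p + (i - a) := by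
    intro p
    simp only [hrow]
    have e : n - (n - 1 - a) - 1 = a := by omega
    simp only [e]
    split_ifs <;> rfl
  have hinj : Function.Injective row := by
    intro p q hpq
    have h := congrArg Fin.val hpq
    rw [hrv, hrv] at h
    apply Fin.ext
    split_ifs at h <;> omega
  have hsurj : ∀ r : Fin n, c r ≠ 0 → ∃ p, row p = r := by
    intro r hr
    have hrn := r.isLt
    rcases hc r hr with h | h
    · refine ⟨⟨r, by omega⟩, Fin.ext ?_⟩
      rw [hrv]; simp [h.2]
    · refine ⟨⟨r - (i - a), by omega⟩, Fin.ext ?_⟩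
      rw [hrv]
      simp only
      split_ifs <;> omega
  have hv : (fun p => c (row p)) = 0 := by
    apply Matrix.eq_zero_of_vecMul_eq_zero hdet
    funext q
    have hq := hz ⟨q, by have := q.isLt; omega⟩ (by have := q.isLt; simp only; omega)
    rw [Pi.zero_apply, ← hq]
    simp only [Matrix.vecMul, dotProduct, Matrix.of_apply]
    apply Finset.sum_of_injOn row (hinj.injOn) (by simp [Set.MapsTo])
    · intro r _ hr
      by_cases h : c r = 0
      · rw [h, zero_mul]
      · obtain ⟨p, hp⟩ := hsurj r h
        exact absurd ⟨p, by simp, hp⟩ hr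
    · intro p _
      rfl
  funext r
  by_contra h
  obtain ⟨p, hp⟩ := hsurj r h
  have := congrFun hv p
  simp only [hp] at this
  exact h this

lemma wordD_len_aux (n : ℕ) (hn : 2 ≤ n) (M : ℕ) (hM : 2 * M ≤ n) :
    (((List.range M).map (blk n)).flatten).length = M * (2 * n - 1 - 2 * M) := by
  induction M with
  | zero => simp
  | succ M ih =>
    rw [List.range_succ, List.map_append, List.flatten_append, List.length_append, ih (by omega)]
    simp only [blk, List.map_cons, List.map_nil, List.flatten_cons, List.flatten_nil,
      List.append_nil, List.length_cons, List.length_append, decRun, List.length_reverse,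
      List.length_range']
    obtain ⟨e, rfl⟩ : ∃ e, n = 2 * M + 2 + e := ⟨n - (2 * M + 2), by omega⟩
    have h1 : 2 * (2 * M + 2 + e) - 1 - 2 * M = 2 * M + 3 + 2 * e := by omega
    have h2 : 2 * (2 * M + 2 + e) - 1 - 2 * (M + 1) = 2 * M + 1 + 2 * e := by omega
    have h3 : 2 * M + 2 + e - 2 + 1 - (2 * M + 1) = e := by omega
    have h4 : 2 * M + 2 + e - 1 + 1 - (2 * M + 2) = e := by omega
    rw [h1, h2, h3, h4]
    ring

lemma wordD_eq_s11 (n : ℕ) : wordD n = ((List.range' 0 (n / 2)).map (blk n)).flatten := by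
  rw [← List.range_eq_range']
  rfl

lemma wordD_len (n : ℕ) (hn : 2 ≤ n) : (wordD n).length = Npar n := by
  rw [wordD_eq_s11, ← List.range_eq_range', wordD_len_aux n hn _ (by omega), Npar]
  rcases Nat.even_or_odd' n with ⟨k, rfl | rfl⟩
  · have h1 : 2 * k / 2 = k := by omega
    have h2 : 2 * (2 * k) - 1 - 2 * k = 2 * k - 1 := by omega
    rw [h1, h2, Nat.mul_assoc, Nat.mul_div_cancel_left _ (by norm_num)]
  · have h1 : (2 * k + 1) / 2 = k := by omega
    have h2 : 2 * (2 * k + 1) - 1 - 2 * k = 2 * k + 1 := by omega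
    have h3 : (2 * k + 1) * (2 * k + 1 - 1) = 2 * (k * (2 * k + 1)) := by
      rw [Nat.add_sub_cancel]; ring
    rw [h1, h2, h3, Nat.mul_div_cancel_left _ (by norm_num)]

/-- A skew-symmetric matrix whose minors `M_{j,k}` are all nonzero lies
in the image of the parametrization `t ↦ A(t)` with all parameters nonzero. -/
theorem mem_param_image_of_Mminor_ne_zero (n : ℕ) (hn : 2 ≤ n)
    (A : Matrix (Fin n) (Fin n) ℝ) (hA : Aᵀ = -A)
    (hne : ∀ j k : ℕ, 1 ≤ j → j ≤ k → k ≤ n - 1 → Mminor n j k A ≠ 0) :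
    ∃ t : ℕ → ℝ, (∀ i < Npar n, t i ≠ 0) ∧ A = Amat n t := by
  have hsk : ∀ i j, A i j = -A j i := by
    intro i j
    have := congrFun (congrFun hA j) i
    simpa using this
  obtain ⟨l, hl, hl0, P, K, hrep, -, -⟩ := key_ind n hn (n / 2) 0 (by omega) A hsk
    (by intro i j h; omega) (NS_of_Mminor n A hne)
  rw [← wordD_eq_s11] at hl
  have hlen : l.length = Npar n := by
    rw [← wordD_len n hn, ← hl, List.length_map]
  refine ⟨fun i => (l.getD i (0, 0)).2, ?_, ?_⟩
  · intro i hi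
    rw [← hlen] at hi
    simp only [List.getD_eq_getElem l (0, 0) hi]
    exact hl0 _ (List.getElem_mem hi)
  · have hprod : prodX n (fun i => (l.getD i (0, 0)).2) = Gl n l := by
      unfold prodX Gl
      congr 1
      apply List.ext_getElem
      · simp [hlen]
      · intro k h1 h2
        have hk : k < l.length := by simpa using h2
        simp only [List.getElem_map, List.getElem_range, List.getD_eq_getElem l (0, 0) hk, ← hl]
        rw [List.getD_eq_getElem _ _ (by simpa using hk)]
        simp
    obtain ⟨hPK, hblk⟩ := hrep
    have h1 : X1 n (fun i => (l.getD i (0, 0)).2) = P := by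
      ext p q
      have := congrFun (congrFun hblk (Sum.inl p)) (Sum.inl q)
      rw [Matrix.fromBlocks_apply₁₁] at this
      rw [← this, X1, hprod, Matrix.of_apply, Matrix.submatrix_apply]
      congr 1 <;> apply Fin.ext <;> simp [phiE_inl]
    have h2 : X2 n (fun i => (l.getD i (0, 0)).2) = P * A := by
      ext p q
      have := congrFun (congrFun hblk (Sum.inl p)) (Sum.inr q)
      rw [Matrix.fromBlocks_apply₁₂] at this
      rw [← this, X2, hprod, Matrix.of_apply, Matrix.submatrix_apply]
      congr 1 <;> apply Fin.ext <;> simp [phiE_inl, phiE_inr]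
    have hKP : K * P = 1 := mul_eq_one_comm.mp hPK
    rw [Amat, h1, h2, Matrix.inv_eq_left_inv hKP, ← Matrix.mul_assoc, hKP, Matrix.one_mul]
end
end
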